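/- arXiv:2011.05835 — 3 statements merged into one kernel-verified Lean document; each statement's English description precedes it below -/
import Mathlib

section
/- Let X = ℓ∞³, Y = ℓ₁³, and let T : X → Y be a bounded linear operator with ‖T‖ = 1 such that M_T ∩ Ext(B_X) = {±x₁, ±x₂, ±x₃, ±x₄}. Suppose |S₁| = 6, |S₂| = 2 and |S₃| = 0. If ±J(Tx_i) = ±J(Tx_j) for all x_i, x_j ∈ S₁ and ±J(Tx_i) ⊆ ±Ext J(Tx_k) for all x_i ∈ S₁ and all x_k ∈ S₂, then T is 4-smooth, i.e., dim span J(T) = 4. -/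
open Metric Set Module Pointwise

noncomputable section

/-- `J x` is the set of supporting functionals of `x`. -/
def suppFunctionals {E : Type*} [NormedAddCommGroup E] [NormedSpace ℝ E] (x : E) :
    Set (E →L[ℝ] ℝ) := {f | ‖f‖ = 1 ∧ f x = 1}

/-- ℓ∞³ : ℝ³ with the max norm. -/
abbrev Linf3 := Fin 3 → ℝ

/-- ℓ₁³ : ℝ³ with the ℓ¹ norm. -/
abbrev L13 := PiLp 1 (fun _ : Fin 3 => ℝ)

def x₁ : Linf3 := ![1, 1, 1]
def x₂ : Linf3 := ![-1, 1, 1]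
def x₃ : Linf3 := ![-1, -1, 1]
def x₄ : Linf3 := ![1, -1, 1]

/-- `M_T ∩ Ext(B_X)`: the norm-attainment set of `T` intersected with the
extreme points of the closed unit ball. -/
def MTExt (T : Linf3 →L[ℝ] L13) : Set Linf3 :=
  {x ∈ sphere (0 : Linf3) 1 | ‖T x‖ = ‖T‖} ∩ extremePoints ℝ (closedBall (0 : Linf3) 1)

/-- `Sk T k` is the set `S_k` of points `x` of `M_T ∩ Ext(B_X)` such that `T x` is
`k`-smooth. -/
def Sk (T : Linf3 →L[ℝ] L13) (k : ℕ) : Set Linf3 :=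
  {x ∈ MTExt T | finrank ℝ (Submodule.span ℝ (suppFunctionals (T x))) = k}

/-- `±A`, i.e. `A ∪ (-A)`. -/
def pm {E : Type*} [NormedAddCommGroup E] [NormedSpace ℝ E] (A : Set (E →L[ℝ] ℝ)) :
    Set (E →L[ℝ] ℝ) := A ∪ (-A)


/-- The functional on `ℓ₁³` with coefficients `c`. -/
def Gf (c : Fin 3 → ℝ) : L13 →L[ℝ] ℝ :=
  ∑ i, c i • PiLp.proj (𝕜 := ℝ) 1 (fun _ : Fin 3 => ℝ) i

lemma Gf_apply (c : Fin 3 → ℝ) (y : L13) : Gf c y = ∑ i, c i * y i := by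
  simp [Gf]

lemma norm_L1 (y : L13) : ‖y‖ = ∑ i, |y i| := by
  simpa using PiLp.norm_eq_of_L1 y

lemma Gf_bound (c : Fin 3 → ℝ) (hc : ∀ i, |c i| ≤ 1) (y : L13) : |Gf c y| ≤ ‖y‖ := by
  rw [Gf_apply, norm_L1]
  refine (Finset.abs_sum_le_sum_abs _ _).trans (Finset.sum_le_sum fun i _ => ?_)
  rw [abs_mul]
  exact mul_le_of_le_one_left (abs_nonneg _) (hc i)

lemma mem_supp_of {E : Type*} [NormedAddCommGroup E] [NormedSpace ℝ E] (x : E) (hx : ‖x‖ = 1)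
    (f : E →L[ℝ] ℝ) (hf : ∀ y, |f y| ≤ ‖y‖) (h : f x = 1) : f ∈ suppFunctionals x := by
  refine ⟨le_antisymm (f.opNorm_le_bound zero_le_one fun y => by simpa using hf y) ?_, h⟩
  have := f.le_opNorm x
  rw [h, hx] at this
  simpa using this

/-- sign vector -/
def sg (y : L13) (i : Fin 3) : ℝ := if y i < 0 then -1 else 1

lemma sg_abs (y : L13) (i) : |sg y i| = 1 := by
  unfold sg; split_ifs <;> simp

lemma sg_mul (y : L13) (i) : sg y i * y i = |y i| := by
  unfold sg; split_ifs with h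
  · rw [abs_of_neg h]; ring
  · rw [abs_of_nonneg (not_lt.1 h)]; ring

/-- flip the sign of one coordinate -/
def flp (s : Fin 3 → ℝ) (p : Fin 3) : Fin 3 → ℝ := fun i => if i = p then -s i else s i

lemma Gf_sg_mem (y : L13) (hy : ‖y‖ = 1) : Gf (sg y) ∈ suppFunctionals y := by
  refine mem_supp_of y hy _ (Gf_bound _ fun i => (sg_abs y i).le) ?_
  rw [Gf_apply, ← hy, norm_L1]
  exact Finset.sum_congr rfl fun i _ => sg_mul y i

lemma flp_abs (s : Fin 3 → ℝ) (p i) : |flp s p i| = |s i| := by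
  unfold flp; split_ifs <;> simp

lemma flp_apply_eq (s : Fin 3 → ℝ) (p) (y : L13) (h : y p = 0) : Gf (flp s p) y = Gf s y := by
  rw [Gf_apply, Gf_apply]
  refine Finset.sum_congr rfl fun i _ => ?_
  unfold flp; split_ifs with hi
  · subst hi; simp [h]
  · rfl

lemma Gf_flp_mem (y : L13) (hy : ‖y‖ = 1) (p) (h : y p = 0) :
    Gf (flp (sg y) p) ∈ suppFunctionals y := by
  refine mem_supp_of y hy _ (Gf_bound _ fun i => (flp_abs _ _ _).trans (sg_abs y i) |>.le) ?_
  rw [flp_apply_eq _ _ _ h]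
  exact (Gf_sg_mem y hy).2

lemma finrank_ge {n : ℕ} (y : L13) (b : Fin n → (L13 →L[ℝ] ℝ)) (hb : LinearIndependent ℝ b)
    (h : ∀ i, b i ∈ suppFunctionals y) :
    n ≤ finrank ℝ (Submodule.span ℝ (suppFunctionals y)) := by
  have := finrank_span_eq_card hb
  rw [Fintype.card_fin] at this
  rw [← this]
  apply Submodule.finrank_mono
  apply Submodule.span_mono
  rintro _ ⟨i, rfl⟩
  exact h i

lemma Gf_single (c : Fin 3 → ℝ) (i : Fin 3) : Gf c (PiLp.single 1 i (1:ℝ)) = c i := by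
  rw [Gf_apply]
  rw [Finset.sum_eq_single i] <;> simp +contextual

lemma one_smooth (y : L13) (hy : ‖y‖ = 1)
    (h : finrank ℝ (Submodule.span ℝ (suppFunctionals y)) = 1) (p) : y p ≠ 0 := by
  intro hp
  have hs : sg y p ≠ 0 := fun h0 => by have := sg_abs y p; simp [h0] at this
  obtain ⟨q, hq⟩ : ∃ q : Fin 3, q ≠ p := exists_ne p
  have hsq : sg y q ≠ 0 := fun h0 => by have := sg_abs y q; simp [h0] at this
  have hli : LinearIndependent ℝ ![Gf (sg y), Gf (flp (sg y) p)] := by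
    rw [LinearIndependent.pair_iff]
    intro a b hab
    have e1 := congrArg (fun f : L13 →L[ℝ] ℝ => f (PiLp.single 1 p (1:ℝ))) hab
    have e2 := congrArg (fun f : L13 →L[ℝ] ℝ => f (PiLp.single 1 q (1:ℝ))) hab
    simp only [_root_.add_apply, _root_.smul_apply, Gf_single, flp,
      if_true, hq, if_false, smul_eq_mul, _root_.zero_apply] at e1 e2
    have e1' : a - b = 0 := (mul_eq_zero.1 (by linarith : (a - b) * sg y p = 0)).resolve_right hs
    have e2' : a + b = 0 := (mul_eq_zero.1 (by linarith : (a + b) * sg y q = 0)).resolve_right hsq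
    constructor <;> linarith
  have := finrank_ge y _ hli (by
    intro i; fin_cases i
    · exact Gf_sg_mem y hy
    · exact Gf_flp_mem y hy p hp)
  omega

lemma supp_coord (y : L13) (hy : ‖y‖ = 1) (f) (hf : f ∈ suppFunctionals y) (i) :
    f (PiLp.single 1 i (1:ℝ)) * y i = |y i| := by
  have hdec : y = ∑ i, y i • PiLp.single 1 i (1:ℝ) := by
    ext j
    fin_cases j <;> simp [Fin.sum_univ_three]
  have hb : ∀ i, f (PiLp.single 1 i (1:ℝ)) * y i ≤ |y i| := by
    intro i
    have h1 := f.le_opNorm (PiLp.single 1 i (1:ℝ))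
    have h2 : ‖(PiLp.single 1 i (1:ℝ) : L13)‖ = 1 := by
      rw [norm_L1]; rw [Finset.sum_eq_single i] <;> simp +contextual
    rw [hf.1, h2, Real.norm_eq_abs] at h1
    calc _ ≤ |f (PiLp.single 1 i (1:ℝ)) * y i| := le_abs_self _
      _ = |f (PiLp.single 1 i (1:ℝ))| * |y i| := abs_mul _ _
      _ ≤ _ := mul_le_of_le_one_left (abs_nonneg _) (by linarith)
  have hsum : ∑ i, f (PiLp.single 1 i (1:ℝ)) * y i = ∑ i, |y i| := by
    rw [← norm_L1, hy]
    refine Eq.trans ?_ hf.2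
    conv_rhs => rw [hdec]
    simp [map_sum, mul_comm]
  exact (Finset.sum_eq_sum_iff_of_le (fun i _ => hb i)).1 hsum i (Finset.mem_univ i)

lemma clm_ext (f g : L13 →L[ℝ] ℝ)
    (h : ∀ i, f (PiLp.single 1 i (1:ℝ)) = g (PiLp.single 1 i (1:ℝ))) : f = g := by
  ext y
  have hdec : y = ∑ i, y i • PiLp.single 1 i (1:ℝ) := by
    ext j
    fin_cases j <;> simp [Fin.sum_univ_three]
  rw [hdec]
  simp [map_sum, h]

lemma two_smooth (y : L13) (hy : ‖y‖ = 1)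
    (h : finrank ℝ (Submodule.span ℝ (suppFunctionals y)) = 2) :
    ∃ p, y p = 0 ∧ ∀ q, q ≠ p → y q ≠ 0 := by
  have hex : ∃ p, y p = 0 := by
    by_contra! hne
    have hsub : suppFunctionals y ⊆ {Gf (sg y)} := by
      intro f hf
      refine clm_ext _ _ fun i => mul_right_cancel₀ (hne i) ?_
      rw [supp_coord y hy f hf, supp_coord y hy _ (Gf_sg_mem y hy)]
    have h1 := Submodule.finrank_mono (R := ℝ) (Submodule.span_mono (R := ℝ) hsub)
    have h2 : finrank ℝ (Submodule.span ℝ {Gf (sg y)}) ≤ 1 := by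
      simpa using finrank_span_le_card (R := ℝ) ({Gf (sg y)} : Set (L13 →L[ℝ] ℝ))
    omega
  obtain ⟨p, hp⟩ := hex
  refine ⟨p, hp, fun q hqp hq => ?_⟩
  obtain ⟨r, hrp, hrq⟩ : ∃ r : Fin 3, r ≠ p ∧ r ≠ q := by
    have : ∀ p q : Fin 3, ∃ r : Fin 3, r ≠ p ∧ r ≠ q := by decide
    exact this p q
  have hs : ∀ i, sg y i ≠ 0 := fun i h0 => by have := sg_abs y i; simp [h0] at this
  have hli : LinearIndependent ℝ ![Gf (sg y), Gf (flp (sg y) p), Gf (flp (sg y) q)] := by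
    rw [Fintype.linearIndependent_iff]
    intro c hc
    simp only [Fin.sum_univ_three, Matrix.cons_val] at hc
    have e1 := congrArg (fun f : L13 →L[ℝ] ℝ => f (PiLp.single 1 p (1:ℝ))) hc
    have e2 := congrArg (fun f : L13 →L[ℝ] ℝ => f (PiLp.single 1 q (1:ℝ))) hc
    have e3 := congrArg (fun f : L13 →L[ℝ] ℝ => f (PiLp.single 1 r (1:ℝ))) hc
    simp only [_root_.add_apply, _root_.smul_apply, Gf_single, flp,
      if_true, hqp, hqp.symm, hrp, hrq, if_false, smul_eq_mul,
      _root_.zero_apply] at e1 e2 e3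
    have e1' := (mul_eq_zero.1
      (by linarith : (c 0 - c 1 + c 2) * sg y p = 0)).resolve_right (hs p)
    have e2' := (mul_eq_zero.1
      (by linarith : (c 0 + c 1 - c 2) * sg y q = 0)).resolve_right (hs q)
    have e3' := (mul_eq_zero.1
      (by linarith : (c 0 + c 1 + c 2) * sg y r = 0)).resolve_right (hs r)
    intro i; fin_cases i <;> simp <;> linarith
  have := finrank_ge y _ hli (by
    intro i; fin_cases i
    · exact Gf_sg_mem y hy
    · exact Gf_flp_mem y hy p hp
    · exact Gf_flp_mem y hy q hq)
  omega

/-- The four vertices. -/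
def vv : Fin 4 → Linf3 := ![x₁, x₂, x₃, x₄]

lemma seg {E : Type*} [NormedAddCommGroup E] [NormedSpace ℝ E] (y z : E) (c : ℝ)
    (hc : |c| ≤ 1) (h1 : ‖y + z‖ ≤ 1) (h2 : ‖y - z‖ ≤ 1) : ‖y + c • z‖ ≤ 1 := by
  obtain ⟨ha, hb⟩ := abs_le.1 hc
  have : y + c • z = ((1 + c) / 2) • (y + z) + ((1 - c) / 2) • (y - z) := by module
  rw [this]
  refine (norm_add_le _ _).trans ?_
  rw [norm_smul, norm_smul, Real.norm_of_nonneg (by linarith), Real.norm_of_nonneg (by linarith)]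
  nlinarith

lemma norm_le_of_vert (S : Linf3 →L[ℝ] L13) (h : ∀ j, ‖S (vv j)‖ ≤ 1) : ‖S‖ ≤ 1 := by
  refine S.opNorm_le_of_unit_norm zero_le_one fun x hx => ?_
  have hxi : ∀ i, |x i| ≤ 1 := fun i => by
    have := norm_le_pi_norm x i; rw [hx] at this; simpa using this
  have key : ∀ w : Linf3, w ∈ ({x₁, x₂, x₃, x₄} : Set Linf3) → ‖S w‖ ≤ 1 ∧ ‖S (-w)‖ ≤ 1 := by
    intro w hw
    rw [map_neg, norm_neg, and_self]
    rcases hw with rfl | rfl | rfl | rfl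
    · exact h 0
    · exact h 1
    · exact h 2
    · exact h 3
  have hv : ∀ a b c : ℝ, (a = 1 ∨ a = -1) → (b = 1 ∨ b = -1) → (c = 1 ∨ c = -1) →
      ‖S ![a, b, c]‖ ≤ 1 := by
    rintro a b c (rfl | rfl) (rfl | rfl) (rfl | rfl)
    · exact h 0
    · convert (key x₃ (by simp)).2 using 3; simp [x₃]
    · exact h 3
    · convert (key x₂ (by simp)).2 using 3; simp [x₂]
    · exact h 1
    · convert (key x₄ (by simp)).2 using 3; simp [x₄]
    · exact h 2
    · convert (key x₁ (by simp)).2 using 3; simp [x₁]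
  have s1 : ∀ b c : ℝ, (b = 1 ∨ b = -1) → (c = 1 ∨ c = -1) → ‖S ![x 0, b, c]‖ ≤ 1 := by
    intro b c hb hc
    have := seg (S ![0, b, c]) (S ![1, 0, 0]) (x 0) (hxi 0)
      (by rw [← map_add]; exact (congrArg (fun z => ‖S z‖) (by simp)).trans_le (hv 1 b c (by simp) hb hc))
      (by rw [← map_sub]; exact (congrArg (fun z => ‖S z‖) (by simp)).trans_le (hv (-1) b c (by simp) hb hc))
    rw [← map_smul, ← map_add] at this
    exact (congrArg (fun z => ‖S z‖) (by simp)).trans_le this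
  have s2 : ∀ c : ℝ, (c = 1 ∨ c = -1) → ‖S ![x 0, x 1, c]‖ ≤ 1 := by
    intro c hc
    have := seg (S ![x 0, 0, c]) (S ![0, 1, 0]) (x 1) (hxi 1)
      (by rw [← map_add]; exact (congrArg (fun z => ‖S z‖) (by simp)).trans_le (s1 1 c (by simp) hc))
      (by rw [← map_sub]; exact (congrArg (fun z => ‖S z‖) (by simp)).trans_le (s1 (-1) c (by simp) hc))
    rw [← map_smul, ← map_add] at this
    exact (congrArg (fun z => ‖S z‖) (by simp)).trans_le this
  have := seg (S ![x 0, x 1, 0]) (S ![0, 0, 1]) (x 2) (hxi 2)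
      (by rw [← map_add]; exact (congrArg (fun z => ‖S z‖) (by simp)).trans_le (s2 1 (by simp)))
      (by rw [← map_sub]; exact (congrArg (fun z => ‖S z‖) (by simp)).trans_le (s2 (-1) (by simp)))
  rw [← map_smul, ← map_add] at this
  exact (congrArg (fun z => ‖S z‖) (by ext i; fin_cases i <;> simp)).trans_le this

/-- The functional `A ↦ c (A x)`. -/
def Phi (x : Linf3) (c : Fin 3 → ℝ) : (Linf3 →L[ℝ] L13) →L[ℝ] ℝ :=
  (Gf c).comp (ContinuousLinearMap.apply ℝ L13 x)

lemma Phi_apply (x c A) : Phi x c A = Gf c (A x) := rfl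

lemma vv_norm (j) : ‖vv j‖ ≤ 1 := by
  rw [pi_norm_le_iff_of_nonneg zero_le_one]
  intro i
  fin_cases j <;> fin_cases i <;> simp [vv, x₁, x₂, x₃, x₄]

lemma Phi_mem (T : Linf3 →L[ℝ] L13) (hT : ‖T‖ = 1) (x : Linf3) (hx : ‖x‖ ≤ 1) (c : Fin 3 → ℝ)
    (hc : ∀ i, |c i| ≤ 1) (h : Gf c (T x) = 1) : Phi x c ∈ suppFunctionals T := by
  refine mem_supp_of T hT _ (fun A => ?_) h
  rw [Phi_apply]
  exact (Gf_bound c hc _).trans (A.unit_le_opNorm x hx)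

lemma Gf_pi_single (p : Fin 3) (y : L13) : Gf (Pi.single p 1) y = y p := by
  rw [Gf_apply, Finset.sum_eq_single p] <;> simp +contextual

lemma eq_zero_of_small (a : ℝ) (h : ∀ᶠ t in nhds (0:ℝ), 1 + t * a ≤ 1) : a = 0 := by
  obtain ⟨δ, hδ, hb⟩ := Metric.eventually_nhds_iff.1 h
  have h1 := @hb (δ / 2) (by rw [Real.dist_eq, sub_zero, abs_of_pos] <;> linarith)
  have h2 := @hb (-(δ / 2)) (by rw [Real.dist_eq, sub_zero, abs_neg, abs_of_pos] <;> linarith)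
  nlinarith

lemma li_dual {V : Type*} [NormedAddCommGroup V] [NormedSpace ℝ V] {n : ℕ}
    (L : Fin n → (V →L[ℝ] ℝ)) (h : ∀ c : Fin n → ℝ, ∑ i, c i • L i = 0 → ∀ i, c i = 0) :
    LinearIndependent ℝ L := by
  rw [Fintype.linearIndependent_iff]
  exact h

set_option maxHeartbeats 1000000 in
lemma core (T : Linf3 →L[ℝ] L13) (hT : ‖T‖ = 1) (s : Fin 3 → ℝ) (hs : ∀ i, |s i| = 1)
    (ε : Fin 4 → ℝ) (hε : ∀ j, |ε j| = 1)
    (hpos : ∀ j i, 0 ≤ s i * (T (ε j • vv j)) i) (hsum : ∀ j, Gf s (T (ε j • vv j)) = 1)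
    (k : Fin 4) (p : Fin 3) (hz : (T (vv k)) p = 0)
    (hnz : ∀ j i, (j ≠ k ∨ i ≠ p) → (T (vv j)) i ≠ 0) :
    finrank ℝ (Submodule.span ℝ (suppFunctionals T)) = 4 := by
  have hε0 : ∀ j, ε j ≠ 0 := fun j h0 => by have := hε j; simp [h0] at this
  have hs0 : ∀ j, s j ≠ 0 := fun j h0 => by have := hs j; simp [h0] at this
  set L : Fin 4 → ((Linf3 →L[ℝ] L13) →L[ℝ] ℝ) :=
    ![Phi (Pi.single 0 1) s, Phi (Pi.single 1 1) s, Phi (Pi.single 2 1) s,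
      Phi (vv k) (Pi.single p 1)] with hL
  -- the vertex functionals
  have hu : ∀ j, ‖ε j • vv j‖ ≤ 1 := fun j => by
    rw [norm_smul, Real.norm_eq_abs, hε, one_mul]; exact vv_norm j
  have hm1 : ∀ j, Phi (ε j • vv j) s ∈ suppFunctionals T := fun j =>
    Phi_mem T hT _ (hu j) s (fun i => (hs i).le) (hsum j)
  have hm2 : Phi (ε k • vv k) (flp s p) ∈ suppFunctionals T := by
    refine Phi_mem T hT _ (hu k) _ (fun i => (flp_abs s p i).trans (hs i) |>.le) ?_
    rw [flp_apply_eq, hsum]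
    simp [hz]
  have hm3 : ∀ j, Phi (vv j) s ∈ Submodule.span ℝ (suppFunctionals T) := fun j => by
    have : Phi (vv j) s = (ε j)⁻¹ • Phi (ε j • vv j) s := by
      ext A
      simp [Phi_apply, hε0 j]
    rw [this]
    exact Submodule.smul_mem _ _ (Submodule.subset_span (hm1 j))
  have hlow : ∀ i, L i ∈ Submodule.span ℝ (suppFunctionals T) := by
    intro i
    fin_cases i
    · have : L 0 = (1/2 : ℝ) • (Phi (vv 0) s - Phi (vv 1) s) := by
        ext A
        have : (Pi.single 0 1 : Linf3) = (1/2 : ℝ) • (vv 0 - vv 1) := by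
          change _ = (1/2 : ℝ) • (x₁ - x₂)
          ext i; fin_cases i <;> simp [x₁, x₂] <;> norm_num
        simp only [hL, Matrix.cons_val, Phi_apply, this, map_smul, map_sub, _root_.smul_apply,
          _root_.sub_apply]
      change L 0 ∈ _
      rw [this]
      exact Submodule.smul_mem _ _ (Submodule.sub_mem _ (hm3 0) (hm3 1))
    · have : L 1 = (1/2 : ℝ) • (Phi (vv 0) s - Phi (vv 3) s) := by
        ext A
        have : (Pi.single 1 1 : Linf3) = (1/2 : ℝ) • (vv 0 - vv 3) := by
          change _ = (1/2 : ℝ) • (x₁ - x₄)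
          ext i; fin_cases i <;> simp [x₁, x₄] <;> norm_num
        simp only [hL, Matrix.cons_val, Phi_apply, this, map_smul, map_sub, _root_.smul_apply,
          _root_.sub_apply]
      change L 1 ∈ _
      rw [this]
      exact Submodule.smul_mem _ _ (Submodule.sub_mem _ (hm3 0) (hm3 3))
    · have : L 2 = (1/2 : ℝ) • (Phi (vv 0) s + Phi (vv 2) s) := by
        ext A
        have : (Pi.single 2 1 : Linf3) = (1/2 : ℝ) • (vv 0 + vv 2) := by
          change _ = (1/2 : ℝ) • (x₁ + x₃)
          ext i; fin_cases i <;> simp [x₁, x₃] <;> norm_num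
        simp only [hL, Matrix.cons_val, Phi_apply, this, map_smul, map_add, _root_.smul_apply,
          _root_.add_apply]
      change L 2 ∈ _
      rw [this]
      exact Submodule.smul_mem _ _ (Submodule.add_mem _ (hm3 0) (hm3 2))
    · have : L 3 = ((2 * ε k * s p)⁻¹ : ℝ) •
          (Phi (ε k • vv k) s - Phi (ε k • vv k) (flp s p)) := by
        ext A
        have e : Gf s (A (vv k)) - Gf (flp s p) (A (vv k)) = 2 * s p * (A (vv k)) p := by
          rw [Gf_apply, Gf_apply, ← Finset.sum_sub_distrib, Finset.sum_eq_single p]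
          · simp [flp]; ring
          · intro b _ hb; simp [flp, hb]
          · simp
        simp only [hL, Matrix.cons_val, Phi_apply, map_smul, _root_.smul_apply,
          _root_.sub_apply, Gf_pi_single]
        rw [← smul_sub, e]
        have := hε0 k
        have := hs0 p
        simp only [smul_eq_mul]
        field_simp
      change L 3 ∈ _
      rw [this]
      exact Submodule.smul_mem _ _ (Submodule.sub_mem _ (Submodule.subset_span (hm1 k))
        (Submodule.subset_span hm2))
  -- independence
  have hli : LinearIndependent ℝ L := by
    refine li_dual L ?_
    intro c hc
    have ev : ∀ (i q : Fin 3), c 0 * ((Pi.single 0 1 : Linf3) i * s q) +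
        c 1 * ((Pi.single 1 1 : Linf3) i * s q) + c 2 * ((Pi.single 2 1 : Linf3) i * s q) +
        c 3 * (vv k i * (Pi.single p 1 : Fin 3 → ℝ) q) = 0 := by
      intro i q
      have := congrArg (fun F : (Linf3 →L[ℝ] L13) →L[ℝ] ℝ =>
        F ((ContinuousLinearMap.proj (R := ℝ) (φ := fun _ : Fin 3 => ℝ) i).smulRight
          (PiLp.single 1 q (1:ℝ)))) hc
      simp only [Fin.sum_univ_four, hL, Matrix.cons_val, _root_.add_apply, _root_.smul_apply,
        Phi_apply, ContinuousLinearMap.smulRight_apply, ContinuousLinearMap.proj_apply, map_smul,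
        Gf_single, smul_eq_mul, _root_.zero_apply] at this
      exact this
    obtain ⟨q, hq⟩ : ∃ q : Fin 3, q ≠ p := exists_ne p
    have c0 : c 0 = 0 := by simpa [hq, hs0] using ev 0 q
    have c1 : c 1 = 0 := by simpa [hq, hs0] using ev 1 q
    have c2 : c 2 = 0 := by simpa [hq, hs0] using ev 2 q
    have hk2 : vv k 2 = 1 := by fin_cases k <;> simp [vv, x₁, x₂, x₃, x₄]
    have c3 : c 3 = 0 := by simpa [c0, c1, c2, hk2] using ev 2 p
    intro i; fin_cases i <;> assumption
  -- upper bound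
  have hup : ∀ F ∈ suppFunctionals T, F ∈ Submodule.span ℝ (Set.range L) := by
    rintro F ⟨hF1, hFT⟩
    have hker : ∀ A, (∀ i, L i A = 0) → F A = 0 := by
      intro A hA
      have h0 : Gf s (A (Pi.single 0 1)) = 0 := hA 0
      have h1 : Gf s (A (Pi.single 1 1)) = 0 := hA 1
      have h2 : Gf s (A (Pi.single 2 1)) = 0 := hA 2
      have h3 : (A (vv k)) p = 0 := by
        rw [← Gf_pi_single]; exact hA 3
      have hGA : ∀ x, Gf s (A x) = 0 := by
        intro x
        have : x = x 0 • (Pi.single 0 1 : Linf3) + x 1 • (Pi.single 1 1 : Linf3)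
            + x 2 • (Pi.single 2 1 : Linf3) := by
          ext i; fin_cases i <;> simp
        rw [this]
        simp [h0, h1, h2]
      have hev : ∀ᶠ t in nhds (0:ℝ), ∀ j i, 0 ≤ s i * ((T + t • A) (ε j • vv j)) i := by
        rw [Filter.eventually_all]; intro j
        rw [Filter.eventually_all]; intro i
        by_cases hji : j ≠ k ∨ i ≠ p
        · have hlt : 0 < s i * (T (ε j • vv j)) i := by
            refine lt_of_le_of_ne (hpos j i) (Ne.symm ?_)
            simp [hs0, hε0, hnz j i hji]
          have hcont : Filter.Tendsto (fun t : ℝ => s i * ((T (ε j • vv j)) i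
              + t * (A (ε j • vv j)) i)) (nhds 0) (nhds (s i * ((T (ε j • vv j)) i
              + 0 * (A (ε j • vv j)) i))) := by
            apply Continuous.tendsto (f := fun t : ℝ => s i * ((T (ε j • vv j)) i
              + t * (A (ε j • vv j)) i)); fun_prop
          rw [zero_mul, add_zero] at hcont
          filter_upwards [hcont.eventually (lt_mem_nhds hlt)] with t ht
          exact ht.le
        · push Not at hji
          obtain ⟨rfl, rfl⟩ := hji
          refine Filter.Eventually.of_forall fun t => ?_
          simp [hz, h3]
      apply eq_zero_of_small
      filter_upwards [hev] with t ht
      have hn : ‖T + t • A‖ ≤ 1 := by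
        apply norm_le_of_vert
        intro j
        have e1 : ‖(T + t • A) (vv j)‖ = ‖(T + t • A) (ε j • vv j)‖ := by
          rw [map_smul, norm_smul, Real.norm_eq_abs, hε, one_mul]
        have e2 : ‖(T + t • A) (ε j • vv j)‖ = Gf s ((T + t • A) (ε j • vv j)) := by
          rw [norm_L1, Gf_apply]
          refine Finset.sum_congr rfl fun i _ => ?_
          rw [← abs_of_nonneg (ht j i), abs_mul, hs, one_mul]
        have e3 : Gf s ((T + t • A) (ε j • vv j)) = 1 := by
          rw [_root_.add_apply, map_add, hsum, _root_.smul_apply, map_smul, hGA]; simp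
        rw [e1, e2, e3]
      have := F.le_opNorm (T + t • A)
      rw [hF1, map_add, map_smul, hFT, Real.norm_eq_abs, smul_eq_mul] at this
      have := le_abs_self (1 + t * F A)
      linarith
    have hmem : (F : (Linf3 →L[ℝ] L13) →ₗ[ℝ] ℝ) ∈ Submodule.span ℝ
        (Set.range fun i => (L i : (Linf3 →L[ℝ] L13) →ₗ[ℝ] ℝ)) := by
      apply mem_span_of_iInf_ker_le_ker
      intro A hA
      simp only [Submodule.mem_iInf, LinearMap.mem_ker] at hA ⊢
      exact hker A hA
    rw [Submodule.mem_span_range_iff_exists_fun] at hmem ⊢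
    obtain ⟨c, hc⟩ := hmem
    refine ⟨c, ?_⟩
    ext A
    have := congrArg (fun f : (Linf3 →L[ℝ] L13) →ₗ[ℝ] ℝ => f A) hc
    simpa [Fin.sum_univ_four] using this
  have hspan : Submodule.span ℝ (suppFunctionals T) = Submodule.span ℝ (Set.range L) := by
    apply le_antisymm
    · exact Submodule.span_le.2 hup
    · refine Submodule.span_le.2 ?_
      rintro _ ⟨i, rfl⟩
      exact hlow i
  rw [hspan, finrank_span_eq_card hli]
  rfl

lemma vv_two (k) : vv k 2 = 1 := by fin_cases k <;> simp [vv, x₁, x₂, x₃, x₄]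

lemma vv_inj : Function.Injective vv := by
  intro a b h
  have h0 := congrFun h 0
  have h1 := congrFun h 1
  fin_cases a <;> fin_cases b <;> try rfl
  all_goals exfalso
  all_goals first
    | (norm_num [vv, x₁, x₂, x₃, x₄] at h0; done)
    | (norm_num [vv, x₁, x₂, x₃, x₄] at h1; done)

lemma vv_ne_neg (a b) : vv a ≠ -vv b := by
  intro h
  have := congrFun h 2
  rw [Pi.neg_apply, vv_two, vv_two] at this
  norm_num at this

theorem stmt_11
    (T : Linf3 →L[ℝ] L13) (hT : ‖T‖ = 1)
    (hMT : MTExt T = {x₁, -x₁, x₂, -x₂, x₃, -x₃, x₄, -x₄})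
    (h1 : (Sk T 1).encard = 6) (h2 : (Sk T 2).encard = 2)
    (h3 : (Sk T 3).encard = 0)
    (hJ : ∀ xi ∈ Sk T 1, ∀ xj ∈ Sk T 1,
      pm (suppFunctionals (T xi)) = pm (suppFunctionals (T xj)))
    (hJ' : ∀ xi ∈ Sk T 1, ∀ xk ∈ Sk T 2,
      pm (suppFunctionals (T xi)) ⊆ pm (extremePoints ℝ (suppFunctionals (T xk))))
    :
    finrank ℝ (Submodule.span ℝ (suppFunctionals T)) = 4 := by
  have hmem : ∀ x, x ∈ MTExt T ↔ ∃ j, x = vv j ∨ x = -vv j := by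
    intro x
    rw [hMT, Fin.exists_fin_succ, Fin.exists_fin_succ, Fin.exists_fin_succ, Fin.exists_fin_one]
    simp [vv, or_assoc]
  have hn : ∀ x ∈ MTExt T, ‖T x‖ = 1 := fun x hx => hx.1.2.trans hT
  have hcard : (MTExt T).encard ≤ 8 := by
    rw [hMT]
    have : ({x₁, -x₁, x₂, -x₂, x₃, -x₃, x₄, -x₄} : Set Linf3)
        = (([x₁, -x₁, x₂, -x₂, x₃, -x₃, x₄, -x₄].toFinset : Finset Linf3) : Set Linf3) := by simp
    rw [this, Set.encard_coe_eq_coe_finsetCard]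
    exact_mod_cast List.toFinset_card_le [x₁, -x₁, x₂, -x₂, x₃, -x₃, x₄, -x₄]
  have hfin : (MTExt T).Finite := by rw [hMT]; exact Set.toFinite _
  have hdisj : Disjoint (Sk T 1) (Sk T 2) := by
    rw [Set.disjoint_left]
    intro x hx hx'
    have := hx.2.symm.trans hx'.2
    omega
  have hun : Sk T 1 ∪ Sk T 2 = MTExt T := by
    refine hfin.eq_of_subset_of_encard_le' ?_ ?_
    · exact Set.union_subset (fun x hx => hx.1) (fun x hx => hx.1)
    · rw [Set.encard_union_eq hdisj, h1, h2]
      refine hcard.trans (le_of_eq ?_)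
      norm_num
  have hS1 : ∀ x ∈ Sk T 1, ∀ i, (T x) i ≠ 0 := fun x hx i => one_smooth _ (hn x hx.1) hx.2 i
  have hS2 : ∀ x ∈ Sk T 2, ∃ p, (T x) p = 0 ∧ ∀ q, q ≠ p → (T x) q ≠ 0 :=
    fun x hx => two_smooth _ (hn x hx.1) hx.2
  have hnegM : ∀ x ∈ MTExt T, -x ∈ MTExt T := by
    intro x hx
    rw [hmem] at hx ⊢
    obtain ⟨j, rfl | rfl⟩ := hx
    · exact ⟨j, Or.inr rfl⟩
    · exact ⟨j, Or.inl (neg_neg _)⟩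
  have hneg : ∀ x ∈ Sk T 2, -x ∈ Sk T 2 := by
    intro x hx
    have := hnegM x hx.1
    rw [← hun] at this
    rcases this with h | h
    · obtain ⟨p, hp, -⟩ := hS2 x hx
      exact absurd (by simp [hp]) (hS1 _ h p)
    · exact h
  have hvM : ∀ j, vv j ∈ MTExt T := fun j => (hmem _).2 ⟨j, Or.inl rfl⟩
  obtain ⟨k, hk⟩ : ∃ k, vv k ∈ Sk T 2 := by
    obtain ⟨x, hx⟩ : (Sk T 2).Nonempty := by
      rw [← Set.encard_ne_zero, h2]; norm_num
    obtain ⟨j, rfl | rfl⟩ := (hmem x).1 hx.1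
    · exact ⟨j, hx⟩
    · exact ⟨j, by simpa using hneg _ hx⟩
  have hoth : ∀ j, j ≠ k → vv j ∈ Sk T 1 := by
    intro j hj
    have := hvM j
    rw [← hun] at this
    refine this.resolve_right fun hj2 => ?_
    have hsub : ({vv k, -vv k, vv j} : Set Linf3) ⊆ Sk T 2 := by
      rintro x (rfl | rfl | rfl)
      · exact hk
      · exact hneg _ hk
      · exact hj2
    have h3' : ({vv k, -vv k, vv j} : Set Linf3).encard = 3 :=
      Set.encard_eq_three.2 ⟨_, _, _, vv_ne_neg k k, fun h => hj (vv_inj h).symm,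
        (vv_ne_neg j k).symm, rfl⟩
    have := Set.encard_le_encard hsub
    rw [h3', h2] at this
    norm_num at this
  obtain ⟨p, hp, hpq⟩ := hS2 _ hk
  obtain ⟨j0, hj0⟩ : ∃ j : Fin 4, j ≠ k := exists_ne k
  set s := sg (T (vv j0)) with hs
  have hg0 : Gf s ∈ pm (suppFunctionals (T (vv j0))) := Or.inl (Gf_sg_mem _ (hn _ (hvM j0)))
  have hg : ∀ j, Gf s ∈ pm (suppFunctionals (T (vv j))) := by
    intro j
    by_cases hj : j = k
    · subst hj
      rcases hJ' _ (hoth j0 hj0) _ hk hg0 with h | h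
      · exact Or.inl h.1
      · exact Or.inr h.1
    · rw [← hJ _ (hoth j0 hj0) _ (hoth j hj)]
      exact hg0
  have hε : ∀ j, ∃ e : ℝ, |e| = 1 ∧ Gf s (T (e • vv j)) = 1 := by
    intro j
    rcases hg j with h | h
    · exact ⟨1, by simp, by simpa using h.2⟩
    · refine ⟨-1, by simp, ?_⟩
      have : (-Gf s) (T (vv j)) = 1 := h.2
      simpa using this
  choose ε hε1 hε2 using hε
  refine core T hT s (sg_abs _) ε hε1 ?_ hε2 k p hp ?_
  · intro j i
    have hnn : ‖T (ε j • vv j)‖ = 1 := by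
      rw [map_smul, norm_smul, Real.norm_eq_abs, hε1, one_mul, hn _ (hvM j)]
    have := supp_coord _ hnn (Gf s)
      (mem_supp_of _ hnn _ (Gf_bound _ fun i => (sg_abs _ i).le) (hε2 j)) i
    rw [Gf_single] at this
    rw [this]; exact abs_nonneg _
  · intro j i hji
    by_cases hj : j = k
    · subst hj
      exact hpq i (hji.resolve_left (by simp))
    · exact hS1 _ (hoth j hj) i
end
end

section
/- Let X = ℓ∞³, Y = ℓ₁³, and let T : X → Y be a bounded linear operator with ‖T‖ = 1 such that M_T ∩ Ext(B_X) = {±x₁, ±x₂, ±x₃, ±x₄}. Suppose |S₁| = 2, |S₂| = 6 and |S₃| = 0. If the intersection ∩_{x_k ∈ S₂} ±J(Tx_k) has at least 2 elements and ±J(Tx_i) ⊆ ±Ext J(Tx_k) for all x_i ∈ S₁ and all x_k ∈ S₂, then T is 6-smooth, i.e., dim span J(T) = 6. -/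
open Metric Set Module Pointwise

noncomputable section

lemma L13_functional (σ : Fin 3 → ℝ) (hσ : ∀ i, |σ i| ≤ 1) :
    ∃ g : L13 →L[ℝ] ℝ, ‖g‖ ≤ 1 ∧ ∀ v, g v = ∑ i, σ i * v i := by
  let g0 : L13 →ₗ[ℝ] ℝ :=
    { toFun := fun v => ∑ i, σ i * v i
      map_add' := by
        intro x y
        simp only [PiLp.add_apply, mul_add, Finset.sum_add_distrib]
      map_smul' := by
        intro m x
        simp only [PiLp.smul_apply, smul_eq_mul, RingHom.id_apply, Finset.mul_sum]
        exact Finset.sum_congr rfl fun i _ => by ring }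
  have hb : ∀ v, ‖g0 v‖ ≤ 1 * ‖v‖ := by
    intro v
    rw [one_mul, PiLp.norm_eq_of_L1]
    change ‖∑ i, σ i * v i‖ ≤ _
    refine (norm_sum_le _ _).trans (Finset.sum_le_sum fun i _ => ?_)
    rw [norm_mul]
    exact mul_le_of_le_one_left (norm_nonneg _) (hσ i)
  exact ⟨g0.mkContinuous 1 hb, LinearMap.mkContinuous_norm_le _ zero_le_one _, fun v => rfl⟩

lemma coord_small (a s : ℝ) : ∀ᶠ t in nhds (0 : ℝ), a = 0 ∨ |t * s| ≤ |a| := by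
  by_cases h : a = 0
  · simp [h]
  · have hc : Filter.Tendsto (fun t : ℝ => |t * s|) (nhds 0) (nhds 0) := by
      have : Continuous (fun t : ℝ => |t * s|) := by fun_prop
      simpa using this.tendsto 0
    filter_upwards [hc.eventually (gt_mem_nhds (abs_pos.mpr h))] with t ht
    exact Or.inr ht.le

lemma local_norm (v s : L13) (hv : ‖v‖ = 1) (hs : ∀ g ∈ suppFunctionals v, g s = 0) :
    ∀ᶠ t in nhds (0 : ℝ), ‖v + t • s‖ ≤ 1 := by
  have hall : ∀ᶠ t in nhds (0 : ℝ), ∀ i, v i = 0 ∨ |t * s i| ≤ |v i| :=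
    Filter.eventually_all.mpr fun i => coord_small (v i) (s i)
  filter_upwards [hall] with t ht
  have hσ : ∀ i, ∃ σ : ℝ, |σ| ≤ 1 ∧ σ * v i = |v i| ∧ σ * (v i + t * s i) = |v i + t * s i| := by
    intro i
    rcases ht i with h | h
    · rcases le_total 0 (t * s i) with h' | h'
      · exact ⟨1, by simp, by simp [h], by simp [h, abs_of_nonneg h']⟩
      · exact ⟨-1, by simp, by simp [h], by simp [h, abs_of_nonpos h']⟩
    · rcases le_total 0 (v i) with h' | h'
      · rw [abs_of_nonneg h', abs_le] at h
        refine ⟨1, by simp, by simp [abs_of_nonneg h'], ?_⟩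
        rw [abs_of_nonneg (by linarith), one_mul]
      · rw [abs_of_nonpos h', abs_le] at h
        refine ⟨-1, by simp, by simp [abs_of_nonpos h'], ?_⟩
        rw [abs_of_nonpos (by linarith), neg_one_mul]
  choose σ h1 h2 h3 using hσ
  obtain ⟨g, hg, hgv⟩ := L13_functional σ h1
  have hgv1 : g v = 1 := by
    rw [hgv, ← hv, PiLp.norm_eq_of_L1]
    exact Finset.sum_congr rfl fun i _ => h2 i
  have hg1 : ‖g‖ = 1 := by
    refine le_antisymm hg ?_
    have := g.le_opNorm v
    rw [hgv1, hv] at this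
    simpa using this
  have h4 : g (v + t • s) = ‖v + t • s‖ := by
    rw [hgv, PiLp.norm_eq_of_L1]
    exact Finset.sum_congr rfl fun i _ => by simpa using h3 i
  rw [← h4, map_add, map_smul, hs g ⟨hg1, hgv1⟩, hgv1]
  simp

lemma mem_of_annihilator {E : Type*} [NormedAddCommGroup E] [NormedSpace ℝ E]
    [FiniteDimensional ℝ E] (W : Submodule ℝ (E →L[ℝ] ℝ)) (F : E →L[ℝ] ℝ)
    (h : ∀ S : E, (∀ G ∈ W, G S = 0) → F S = 0) : F ∈ W := by
  by_contra hF
  obtain ⟨ψ, hψ, hW⟩ := Submodule.exists_le_ker_of_notMem hF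
  let e : (E →ₗ[ℝ] ℝ) ≃ₗ[ℝ] (E →L[ℝ] ℝ) := LinearMap.toContinuousLinearMap
  let S : E := (Module.evalEquiv ℝ E).symm (ψ.comp e.toLinearMap)
  have hS : ∀ G : E →L[ℝ] ℝ, G S = ψ G := by
    intro G
    have h1 : (Module.evalEquiv ℝ E) S = ψ.comp e.toLinearMap := by simp [S]
    have h2 := LinearMap.congr_fun h1 (G : E →ₗ[ℝ] ℝ)
    have h3 : e (G : E →ₗ[ℝ] ℝ) = G := by ext x; rfl
    simpa [h3] using h2
  apply hψ
  rw [← hS]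
  exact h S fun G hG => by rw [hS]; exact hW hG

abbrev OpE := Linf3 →L[ℝ] L13

/-- `g ↦ (S ↦ g (S x))`. -/
def tens (x : Linf3) : (L13 →L[ℝ] ℝ) →ₗ[ℝ] (OpE →L[ℝ] ℝ) where
  toFun g := g.comp (ContinuousLinearMap.apply ℝ L13 x)
  map_add' := by intros; ext; simp
  map_smul' := by intros; ext; simp

lemma tens_apply (x : Linf3) (g : L13 →L[ℝ] ℝ) (S : OpE) : tens x g S = g (S x) := rfl

lemma tens_mem (T : OpE) (hT : ‖T‖ = 1) (x : Linf3) (hx : ‖x‖ = 1) (g : L13 →L[ℝ] ℝ)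
    (hg : g ∈ suppFunctionals (T x)) : tens x g ∈ suppFunctionals T := by
  have h1 : tens x g T = 1 := hg.2
  refine ⟨le_antisymm ?_ ?_, h1⟩
  · refine ContinuousLinearMap.opNorm_le_bound _ zero_le_one fun S => ?_
    rw [tens_apply]
    have := g.le_opNorm (S x)
    have h2 := S.le_opNorm x
    rw [hg.1] at this
    rw [hx] at h2
    linarith
  · have := (tens x g).le_opNorm T
    rw [h1, hT] at this
    simpa using this

/-- every supporting functional of `T` is in the span of the elementary ones -/
lemma supp_mem (T : OpE) (hT : ‖T‖ = 1) (w a b c : Linf3)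
    (hw : ‖T w‖ = 1) (ha : ‖T a‖ = 1) (hb : ‖T b‖ = 1) (hc : ‖T c‖ = 1)
    (hN : ∀ A : OpE, ‖A w‖ ≤ 1 → ‖A a‖ ≤ 1 → ‖A b‖ ≤ 1 → ‖A c‖ ≤ 1 → ‖A‖ ≤ 1)
    (W : Submodule ℝ (OpE →L[ℝ] ℝ))
    (hW : ∀ x, (x = w ∨ x = a ∨ x = b ∨ x = c) → ∀ g ∈ suppFunctionals (T x), tens x g ∈ W)
    (F : OpE →L[ℝ] ℝ) (hF : F ∈ suppFunctionals T) : F ∈ W := by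
  apply mem_of_annihilator
  intro S hS
  have key : ∀ x, (x = w ∨ x = a ∨ x = b ∨ x = c) → ‖T x‖ = 1 →
      ∀ᶠ t in nhds (0 : ℝ), ‖T x + t • S x‖ ≤ 1 := fun x hx hTx =>
    local_norm _ _ hTx fun g hg => hS _ (hW x hx g hg)
  have hev : ∀ᶠ t in nhds (0 : ℝ), t * F S ≤ 0 := by
    filter_upwards [key w (by simp) hw, key a (by simp) ha, key b (by simp) hb,
      key c (by simp) hc] with t h1 h2 h3 h4
    have h5 : ‖T + t • S‖ ≤ 1 := hN _ h1 h2 h3 h4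
    have h6 := F.le_opNorm (T + t • S)
    rw [hF.1, map_add, map_smul, hF.2, smul_eq_mul] at h6
    have h7 := le_abs_self (1 + t * F S)
    rw [Real.norm_eq_abs] at h6
    linarith
  obtain ⟨ε, hε, h⟩ := Metric.eventually_nhds_iff.mp hev
  have h1 := @h (ε / 2) (by rw [Real.dist_eq, sub_zero, abs_of_pos] <;> linarith)
  have h2 := @h (-(ε / 2)) (by rw [Real.dist_eq, sub_zero, abs_neg, abs_of_pos] <;> linarith)
  nlinarith

lemma core_s15 (T : OpE) (hT : ‖T‖ = 1) (w a b c : Linf3) (α β γ : ℝ)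
    (hwabc : w = α • a + β • b + γ • c)
    (na : ‖a‖ = 1) (nb : ‖b‖ = 1) (nc : ‖c‖ = 1)
    (hw : ‖T w‖ = 1) (ha : ‖T a‖ = 1) (hb : ‖T b‖ = 1) (hc : ‖T c‖ = 1)
    (hN : ∀ A : OpE, ‖A w‖ ≤ 1 → ‖A a‖ ≤ 1 → ‖A b‖ ≤ 1 → ‖A c‖ ≤ 1 → ‖A‖ ≤ 1)
    (p q r : Linf3 →L[ℝ] ℝ)
    (hp : p a = 1 ∧ p b = 0 ∧ p c = 0) (hq : q a = 0 ∧ q b = 1 ∧ q c = 0)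
    (hr : r a = 0 ∧ r b = 0 ∧ r c = 1)
    (da : finrank ℝ (Submodule.span ℝ (suppFunctionals (T a))) = 2)
    (db : finrank ℝ (Submodule.span ℝ (suppFunctionals (T b))) = 2)
    (dc : finrank ℝ (Submodule.span ℝ (suppFunctionals (T c))) = 2)
    (ja : suppFunctionals (T w) ⊆ Submodule.span ℝ (suppFunctionals (T a)))
    (jb : suppFunctionals (T w) ⊆ Submodule.span ℝ (suppFunctionals (T b)))
    (jc : suppFunctionals (T w) ⊆ Submodule.span ℝ (suppFunctionals (T c))) :
    finrank ℝ (Submodule.span ℝ (suppFunctionals T)) = 6 := by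
  set Va := Submodule.span ℝ (suppFunctionals (T a)) with hVa
  set Vb := Submodule.span ℝ (suppFunctionals (T b)) with hVb
  set Vc := Submodule.span ℝ (suppFunctionals (T c)) with hVc
  let Φ : (Va × Vb × Vc) →ₗ[ℝ] (OpE →L[ℝ] ℝ) :=
    ((tens a).comp Va.subtype).coprod
      (((tens b).comp Vb.subtype).coprod ((tens c).comp Vc.subtype))
  have hΦ : ∀ f g h, ∀ S : OpE, Φ (f, g, h) S =
      (f : L13 →L[ℝ] ℝ) (S a) + ((g : L13 →L[ℝ] ℝ) (S b) + (h : L13 →L[ℝ] ℝ) (S c)) :=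
    fun f g h S => rfl
  have hinj : Function.Injective Φ := by
    rw [injective_iff_map_eq_zero]
    rintro ⟨f, g, h⟩ h0
    have h1 : ∀ S : OpE, (f : L13 →L[ℝ] ℝ) (S a) +
        ((g : L13 →L[ℝ] ℝ) (S b) + (h : L13 →L[ℝ] ℝ) (S c)) = 0 := by
      intro S; rw [← hΦ, h0]; rfl
    have hf : f = 0 := by
      ext y
      simpa [hp.1, hp.2.1, hp.2.2] using h1 (p.smulRight y)
    have hg : g = 0 := by
      ext y
      simpa [hq.1, hq.2.1, hq.2.2] using h1 (q.smulRight y)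
    have hh : h = 0 := by
      ext y
      simpa [hr.1, hr.2.1, hr.2.2] using h1 (r.smulRight y)
    rw [hf, hg, hh]; rfl
  have ma : ∀ g ∈ Va, tens a g ∈ LinearMap.range Φ := fun g hg =>
    ⟨(⟨g, hg⟩, 0, 0), by ext S; simp [hΦ, tens_apply]⟩
  have mb : ∀ g ∈ Vb, tens b g ∈ LinearMap.range Φ := fun g hg =>
    ⟨(0, ⟨g, hg⟩, 0), by ext S; simp [hΦ, tens_apply]⟩
  have mc : ∀ g ∈ Vc, tens c g ∈ LinearMap.range Φ := fun g hg =>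
    ⟨(0, 0, ⟨g, hg⟩), by ext S; simp [hΦ, tens_apply]⟩
  have hrange : Submodule.span ℝ (suppFunctionals T) = LinearMap.range Φ := by
    apply le_antisymm
    · refine Submodule.span_le.mpr fun F hF => ?_
      refine supp_mem T hT w a b c hw ha hb hc hN _ ?_ F hF
      rintro x (rfl | rfl | rfl | rfl) g hg
      · have : tens x g = α • tens a g + β • tens b g + γ • tens c g := by
          ext S
          simp only [tens_apply, add_apply, smul_apply]
          rw [hwabc]; simp
        rw [this]
        exact add_mem (add_mem (Submodule.smul_mem _ _ (ma g (ja hg)))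
          (Submodule.smul_mem _ _ (mb g (jb hg)))) (Submodule.smul_mem _ _ (mc g (jc hg)))
      · exact ma g (Submodule.subset_span hg)
      · exact mb g (Submodule.subset_span hg)
      · exact mc g (Submodule.subset_span hg)
    · have hle : ∀ x, ‖x‖ = 1 → ∀ g ∈ Submodule.span ℝ (suppFunctionals (T x)),
          tens x g ∈ Submodule.span ℝ (suppFunctionals T) := by
        intro x hx g hg
        have : Submodule.span ℝ (suppFunctionals (T x)) ≤
            (Submodule.span ℝ (suppFunctionals T)).comap (tens x) :=
          Submodule.span_le.mpr fun g hg => Submodule.subset_span (tens_mem T hT x hx g hg)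
        exact this hg
      rintro _ ⟨⟨f, g, h⟩, rfl⟩
      exact add_mem (hle a na f f.2) (add_mem (hle b nb g g.2) (hle c nc h h.2))
  haveI : Module.Free ℝ Va := Module.Free.of_divisionRing ℝ Va
  haveI : Module.Free ℝ Vb := Module.Free.of_divisionRing ℝ Vb
  haveI : Module.Free ℝ Vc := Module.Free.of_divisionRing ℝ Vc
  rw [hrange, LinearMap.finrank_range_of_inj hinj, Module.finrank_prod, Module.finrank_prod,
    da, db, dc]

lemma norm_vertices (A : OpE) (h1 : ‖A x₁‖ ≤ 1) (h2 : ‖A x₂‖ ≤ 1) (h3 : ‖A x₃‖ ≤ 1)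
    (h4 : ‖A x₄‖ ≤ 1) : ‖A‖ ≤ 1 := by
  have hconv : ∀ (u v : Linf3) (s : ℝ), |s| ≤ 1 → ‖A u‖ ≤ 1 → ‖A v‖ ≤ 1 →
      ‖A (((1 + s) / 2) • u + ((1 - s) / 2) • v)‖ ≤ 1 := by
    intro u v s hs hu hv
    rw [abs_le] at hs
    rw [map_add, map_smul, map_smul]
    refine (norm_add_le _ _).trans ?_
    rw [norm_smul, norm_smul, Real.norm_of_nonneg (by linarith), Real.norm_of_nonneg (by linarith)]
    nlinarith
  have n3 : ‖A (-x₃)‖ ≤ 1 := by simpa using h3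
  have n4 : ‖A (-x₄)‖ ≤ 1 := by simpa using h4
  have n1 : ‖A (-x₁)‖ ≤ 1 := by simpa using h1
  have n2 : ‖A (-x₂)‖ ≤ 1 := by simpa using h2
  have hball : ∀ x : Linf3, ‖x‖ ≤ 1 → ‖A x‖ ≤ 1 := by
    intro x hx
    have hxi : ∀ i, |x i| ≤ 1 := fun i => (norm_le_pi_norm x i).trans hx
    have e1 := hconv _ _ _ (hxi 0) h1 h2
    have e2 := hconv _ _ _ (hxi 0) h4 h3
    have e3 := hconv _ _ _ (hxi 0) n3 n4
    have e4 := hconv _ _ _ (hxi 0) n2 n1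
    have e5 := hconv _ _ _ (hxi 1) e1 e2
    have e6 := hconv _ _ _ (hxi 1) e3 e4
    have e7 := hconv _ _ _ (hxi 2) e5 e6
    convert e7 using 3
    ext i
    fin_cases i <;> simp [x₁, x₂, x₃, x₄] <;> ring
  refine ContinuousLinearMap.opNorm_le_of_unit_norm zero_le_one fun x hx => hball x hx.le

lemma supp_neg {E : Type*} [NormedAddCommGroup E] [NormedSpace ℝ E] (x : E) :
    suppFunctionals (-x) = -suppFunctionals x := by
  ext f
  simp [suppFunctionals]

lemma span_supp_neg {E : Type*} [NormedAddCommGroup E] [NormedSpace ℝ E] (x : E) :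
    Submodule.span ℝ (suppFunctionals (-x)) = Submodule.span ℝ (suppFunctionals x) := by
  rw [supp_neg, Submodule.span_neg]

/-- the functional with given coefficients -/
def lin3 (a b c : ℝ) : Linf3 →L[ℝ] ℝ :=
  a • ContinuousLinearMap.proj 0 + b • ContinuousLinearMap.proj 1 + c • ContinuousLinearMap.proj 2

lemma lin3_apply (a b c : ℝ) (x : Linf3) : lin3 a b c x = a * x 0 + b * x 1 + c * x 2 := rfl

theorem stmt_15
    (T : Linf3 →L[ℝ] L13) (hT : ‖T‖ = 1)
    (hMT : MTExt T = {x₁, -x₁, x₂, -x₂, x₃, -x₃, x₄, -x₄})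
    (h1 : (Sk T 1).encard = 2) (h2 : (Sk T 2).encard = 6)
    (h3 : (Sk T 3).encard = 0)
    (hcap : 2 ≤ (⋂ x ∈ Sk T 2, pm (suppFunctionals (T x))).encard)
    (hJ' : ∀ xi ∈ Sk T 1, ∀ xk ∈ Sk T 2,
      pm (suppFunctionals (T xi)) ⊆ pm (extremePoints ℝ (suppFunctionals (T xk))))
    :
    finrank ℝ (Submodule.span ℝ (suppFunctionals T)) = 6 := by
  have hmem : ∀ x, (x = x₁ ∨ x = x₂ ∨ x = x₃ ∨ x = x₄) → x ∈ MTExt T := by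
    rw [hMT]
    rintro x (rfl | rfl | rfl | rfl) <;> simp
  have hn : ∀ x ∈ MTExt T, ‖x‖ = 1 ∧ ‖T x‖ = 1 := by
    intro x hx
    refine ⟨by simpa using hx.1.1, ?_⟩
    rw [← hT]; exact hx.1.2
  have hcard : (MTExt T).encard ≤ 8 := by
    rw [hMT]
    have key : ∀ (x : Linf3) (s : Set Linf3) (n : ℕ), s.encard ≤ n →
        (insert x s).encard ≤ (n + 1 : ℕ) := by
      intro x s n h
      refine (Set.encard_insert_le s x).trans ?_
      push_cast
      gcongr
    exact key _ _ _ (key _ _ _ (key _ _ _ (key _ _ _ (key _ _ _ (key _ _ _ (key _ _ _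
      (by simp)))))))
  have hdisj : Disjoint (Sk T 1) (Sk T 2) := by
    rw [Set.disjoint_left]
    intro x h h'
    have := h.2.symm.trans h'.2
    omega
  have hunion : Sk T 1 ∪ Sk T 2 = MTExt T := by
    have hfin : (MTExt T).Finite := Set.finite_of_encard_le_coe (k := 8) hcard
    refine Set.Finite.eq_of_subset_of_encard_le' ?_ ?_ ?_
    · exact hfin
    · exact Set.union_subset (fun x h => h.1) (fun x h => h.1)
    · rw [Set.encard_union_eq hdisj, h1, h2]
      refine hcard.trans ?_
      norm_num
  have hneg : ∀ x ∈ Sk T 1, -x ∈ Sk T 1 := by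
    intro x hx
    refine ⟨?_, ?_⟩
    · have := hx.1
      rw [hMT] at this ⊢
      simp only [Set.mem_insert_iff, Set.mem_singleton_iff] at this ⊢
      rcases this with h | h | h | h | h | h | h | h <;> simp [h]
    · rw [map_neg, span_supp_neg]; exact hx.2
  have huniq : ∀ x ∈ Sk T 1, ∀ y, y ∈ MTExt T → y ≠ x → y ≠ -x → y ∈ Sk T 2 := by
    intro x hx y hy hyx hyx'
    have hy2 := hy
    rw [← hunion] at hy2
    rcases hy2 with h | h
    · exfalso
      have hxx : x ≠ -x := by
        intro h0
        have h3 := (hn x hx.1).1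
        rw [self_eq_neg.mp h0] at h3
        simp at h3
      have hsub : ({y, x, -x} : Set Linf3) ⊆ Sk T 1 := by
        rintro z (rfl | rfl | rfl)
        · exact h
        · exact hx
        · exact hneg _ hx
      have hle := Set.encard_le_encard hsub
      rw [h1, Set.encard_insert_of_notMem (by simp [hyx, hyx']), Set.encard_pair hxx] at hle
      exact absurd hle (by decide)
    · exact h
  have hspan : ∀ xi ∈ Sk T 1, ∀ xk ∈ Sk T 2,
      suppFunctionals (T xi) ⊆ Submodule.span ℝ (suppFunctionals (T xk)) := by
    intro xi hi xk hk g hg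
    rcases hJ' xi hi xk hk (Or.inl hg) with h | h
    · exact Submodule.subset_span h.1
    · have : -g ∈ Submodule.span ℝ (suppFunctionals (T xk)) := Submodule.subset_span h.1
      simpa using neg_mem this
  have fin : ∀ (w a b c : Linf3) (α β γ : ℝ) (p q r : Linf3 →L[ℝ] ℝ), w ∈ Sk T 1 →
      a ∈ MTExt T → b ∈ MTExt T → c ∈ MTExt T →
      w = α • a + β • b + γ • c →
      (∀ A : OpE, ‖A w‖ ≤ 1 → ‖A a‖ ≤ 1 → ‖A b‖ ≤ 1 → ‖A c‖ ≤ 1 → ‖A‖ ≤ 1) →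
      (p a = 1 ∧ p b = 0 ∧ p c = 0) → (q a = 0 ∧ q b = 1 ∧ q c = 0) →
      (r a = 0 ∧ r b = 0 ∧ r c = 1) →
      (α ≠ 0 ∧ β ≠ 0 ∧ γ ≠ 0) →
      finrank ℝ (Submodule.span ℝ (suppFunctionals T)) = 6 := by
    intro w a b c α β γ p q r hw ha hb hc hwe hN hp hq hr hne
    have pw : p w = α := by simp [hwe, hp]
    have qw : q w = β := by simp [hwe, hq]
    have rw' : r w = γ := by simp [hwe, hr]
    have a2 : a ∈ Sk T 2 := by
      refine huniq w hw a ha ?_ ?_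
      · intro h; apply hne.2.1; rw [← qw, ← h, hq.1]
      · intro h; apply hne.2.1; rw [← qw, ← neg_eq_zero, ← map_neg, ← h, hq.1]
    have b2 : b ∈ Sk T 2 := by
      refine huniq w hw b hb ?_ ?_
      · intro h; apply hne.1; rw [← pw, ← h, hp.2.1]
      · intro h; apply hne.1; rw [← pw, ← neg_eq_zero, ← map_neg, ← h, hp.2.1]
    have c2 : c ∈ Sk T 2 := by
      refine huniq w hw c hc ?_ ?_
      · intro h; apply hne.1; rw [← pw, ← h, hp.2.2]
      · intro h; apply hne.1; rw [← pw, ← neg_eq_zero, ← map_neg, ← h, hp.2.2]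
    exact core_s15 T hT w a b c α β γ hwe (hn a ha).1 (hn b hb).1 (hn c hc).1 (hn w hw.1).2
      (hn a ha).2 (hn b hb).2 (hn c hc).2 hN p q r hp hq hr a2.2 b2.2 c2.2
      (hspan w hw a a2) (hspan w hw b b2) (hspan w hw c c2)
  have hex : ∃ x, x ∈ Sk T 1 ∧ (x = x₁ ∨ x = x₂ ∨ x = x₃ ∨ x = x₄) := by
    have hne : (Sk T 1).Nonempty := by
      rw [← Set.encard_ne_zero, h1]; decide
    obtain ⟨x, hx⟩ := hne
    have hx' := hx.1
    rw [hMT] at hx'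
    simp only [Set.mem_insert_iff, Set.mem_singleton_iff] at hx'
    have hnx := hneg x hx
    rcases hx' with h | h | h | h | h | h | h | h
    · exact ⟨x, hx, by simp [h]⟩
    · exact ⟨-x, hnx, by simp [h]⟩
    · exact ⟨x, hx, by simp [h]⟩
    · exact ⟨-x, hnx, by simp [h]⟩
    · exact ⟨x, hx, by simp [h]⟩
    · exact ⟨-x, hnx, by simp [h]⟩
    · exact ⟨x, hx, by simp [h]⟩
    · exact ⟨-x, hnx, by simp [h]⟩
  have m1 := hmem x₁ (by simp)
  have m2 := hmem x₂ (by simp)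
  have m3 := hmem x₃ (by simp)
  have m4 := hmem x₄ (by simp)
  obtain ⟨x, hx, rfl | rfl | rfl | rfl⟩ := hex
  · refine fin x₁ x₂ x₃ x₄ 1 (-1) 1 (lin3 0 (1/2) (1/2)) (lin3 (-1/2) (-1/2) 0)
      (lin3 (1/2) 0 (1/2)) hx m2 m3 m4 ?_ (fun A h1 h2 h3 h4 => norm_vertices A h1 h2 h3 h4)
      ?_ ?_ ?_ (by norm_num)
    · ext i; fin_cases i <;> norm_num [x₁, x₂, x₃, x₄]
    all_goals (refine ⟨?_, ?_, ?_⟩ <;> simp [lin3_apply, x₁, x₂, x₃, x₄] <;> norm_num)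
  · refine fin x₂ x₁ x₃ x₄ 1 1 (-1) (lin3 0 (1/2) (1/2)) (lin3 (-1/2) 0 (1/2))
      (lin3 (1/2) (-1/2) 0) hx m1 m3 m4 ?_ (fun A h2 h1 h3 h4 => norm_vertices A h1 h2 h3 h4)
      ?_ ?_ ?_ (by norm_num)
    · ext i; fin_cases i <;> norm_num [x₁, x₂, x₃, x₄]
    all_goals (refine ⟨?_, ?_, ?_⟩ <;> simp [lin3_apply, x₁, x₂, x₃, x₄] <;> norm_num)
  · refine fin x₃ x₁ x₂ x₄ (-1) 1 1 (lin3 (1/2) (1/2) 0) (lin3 (-1/2) 0 (1/2))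
      (lin3 0 (-1/2) (1/2)) hx m1 m2 m4 ?_ (fun A h3 h1 h2 h4 => norm_vertices A h1 h2 h3 h4)
      ?_ ?_ ?_ (by norm_num)
    · ext i; fin_cases i <;> norm_num [x₁, x₂, x₃, x₄]
    all_goals (refine ⟨?_, ?_, ?_⟩ <;> simp [lin3_apply, x₁, x₂, x₃, x₄] <;> norm_num)
  · refine fin x₄ x₁ x₂ x₃ 1 (-1) 1 (lin3 (1/2) 0 (1/2)) (lin3 (-1/2) (1/2) 0)
      (lin3 0 (-1/2) (1/2)) hx m1 m2 m3 ?_ (fun A h4 h1 h2 h3 => norm_vertices A h1 h2 h3 h4)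
      ?_ ?_ ?_ (by norm_num)
    · ext i; fin_cases i <;> norm_num [x₁, x₂, x₃, x₄]
    all_goals (refine ⟨?_, ?_, ?_⟩ <;> simp [lin3_apply, x₁, x₂, x₃, x₄] <;> norm_num)
end
end

section
/- Let X = ℓ∞³, Y = ℓ₁³, and let T : X → Y be a bounded linear operator with ‖T‖ = 1 such that M_T ∩ Ext(B_X) = {±x₁, ±x₂, ±x₃, ±x₄}. Suppose |S₁| = 6, |S₂| = 0 and |S₃| = 2. If ±J(Tx_i) = ±J(Tx_j) for all x_i, x_j ∈ S₁, then T is 5-smooth, i.e., dim span J(T) = 5. -/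
open Metric Set Module Pointwise

noncomputable section

def coordF (c : Fin 3 → ℝ) : L13 →L[ℝ] ℝ :=
  ∑ j, c j • (PiLp.proj 1 (fun _ : Fin 3 => ℝ) j : L13 →L[ℝ] ℝ)

lemma coordF_apply (c : Fin 3 → ℝ) (y : L13) : coordF c y = c 0 * y 0 + c 1 * y 1 + c 2 * y 2 := by
  simp [coordF, Fin.sum_univ_three]

lemma norm13 (y : L13) : ‖y‖ = |y 0| + |y 1| + |y 2| := by
  simp [PiLp.norm_eq_of_L1, Fin.sum_univ_three]

lemma coordF_mem (c : Fin 3 → ℝ) (hc : ∀ j, |c j| ≤ 1) (y : L13) (hy : ‖y‖ = 1)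
    (h : coordF c y = 1) : coordF c ∈ suppFunctionals y := by
  refine ⟨le_antisymm ?_ ?_, h⟩
  · refine ContinuousLinearMap.opNorm_le_bound _ zero_le_one fun x => ?_
    rw [coordF_apply, norm13, Real.norm_eq_abs, one_mul]
    have key : ∀ j, |c j * x j| ≤ |x j| := fun j => by
      rw [abs_mul]; exact mul_le_of_le_one_left (abs_nonneg _) (hc j)
    have h0 := key 0
    have h1 := key 1
    have h2 := key 2
    have := abs_add_three (c 0 * x 0) (c 1 * x 1) (c 2 * x 2)
    linarith
  · have := (coordF c).le_opNorm y
    rw [h, hy] at this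
    simpa using this

lemma supp_unique (y : L13) (h : finrank ℝ (Submodule.span ℝ (suppFunctionals y)) = 1)
    {f g : L13 →L[ℝ] ℝ} (hf : f ∈ suppFunctionals y) (hg : g ∈ suppFunctionals y) : f = g := by
  have hf' : (⟨f, Submodule.subset_span hf⟩ : Submodule.span ℝ (suppFunctionals y)) ≠ 0 := by
    intro h0
    have : f = 0 := congrArg Subtype.val h0
    have h1 := hf.2
    rw [this] at h1
    simp at h1
  obtain ⟨c, hc⟩ := (finrank_eq_one_iff_of_nonzero' (K := ℝ) (V := Submodule.span ℝ (suppFunctionals y))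
    ⟨f, Submodule.subset_span hf⟩ hf').1 h ⟨g, Submodule.subset_span hg⟩
  have hc' : c • f = g := congrArg Subtype.val hc
  have h1 : c * f y = g y := by rw [← hc']; simp
  rw [hf.2, hg.2, mul_one] at h1
  rw [← hc', h1, one_smul]

lemma sgn_mul (a : ℝ) : (SignType.sign a : ℝ) * a = |a| := by
  exact sign_mul_self a

lemma sgn_abs (a : ℝ) : |(SignType.sign a : ℝ)| ≤ 1 := by
  rcases lt_trichotomy a 0 with h | h | h <;> simp [h]

lemma coords_ne (y : L13) (hy : ‖y‖ = 1)
    (h : finrank ℝ (Submodule.span ℝ (suppFunctionals y)) = 1) (k : Fin 3) : y k ≠ 0 := by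
  intro hk
  have key : ∀ a : ℝ, |a| ≤ 1 →
      coordF (Function.update (fun j => (SignType.sign (y j) : ℝ)) k a) ∈ suppFunctionals y := by
    intro a ha
    apply coordF_mem _ _ _ hy
    · rw [coordF_apply, ← hy, norm13]
      have : ∀ j, Function.update (fun j => (SignType.sign (y j) : ℝ)) k a j * y j = |y j| := by
        intro j
        by_cases hj : j = k
        · subst hj; simp [hk]
        · simp only [Function.update_of_ne hj]; exact sgn_mul _
      rw [this, this, this]
    · intro j
      by_cases hj : j = k
      · subst hj; simpa using ha
      · simp only [Function.update_of_ne hj]; exact sgn_abs _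
  have e := supp_unique y h (key 1 (by simp)) (key (-1) (by simp))
  have e2 := congrArg (fun F : L13 →L[ℝ] ℝ => F (WithLp.toLp 1 (Pi.single k 1))) e
  simp only [coordF_apply] at e2
  fin_cases k <;> simp [Function.update] at e2 <;> norm_num at e2

lemma f_eq (f : L13 →L[ℝ] ℝ) : ∃ c, f = coordF c ∧ ∀ j, |c j| ≤ ‖f‖ := by
  refine ⟨fun j => f (WithLp.toLp 1 (Pi.single j 1)), ?_, fun j => ?_⟩
  · ext x
    rw [coordF_apply]
    have hx : x = x 0 • (WithLp.toLp 1 (Pi.single 0 1) : L13) + x 1 • (WithLp.toLp 1 (Pi.single 1 1) : L13)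
      + x 2 • (WithLp.toLp 1 (Pi.single 2 1) : L13) := by
      ext j; fin_cases j <;> simp
    conv_lhs => rw [hx]
    simp only [map_add, map_smul, smul_eq_mul]
    ring
  · have := f.le_opNorm (WithLp.toLp 1 (Pi.single j 1))
    have h1 : ‖(WithLp.toLp 1 (Pi.single j 1) : L13)‖ = 1 := by
      rw [norm13]; fin_cases j <;> simp
    rw [h1, mul_one] at this
    exact this

lemma abs_near (a b : ℝ) (ha : a ≠ 0) : ∃ d > 0, ∀ t : ℝ, |t| ≤ d →
    |a + t * b| = (SignType.sign a : ℝ) * (a + t * b) := by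
  refine ⟨|a| / (|b| + 1), by positivity, fun t ht => ?_⟩
  have h1 : |t * b| ≤ |a| := by
    rw [abs_mul]
    rw [le_div_iff₀ (by positivity)] at ht
    nlinarith [abs_nonneg t, abs_nonneg b]
  rcases lt_or_gt_of_ne ha with h | h
  · rw [sign_neg h, abs_of_nonpos]
    · simp
    · rw [abs_of_neg h] at h1
      linarith [le_abs_self (t * b)]
  · rw [sign_pos h, abs_of_nonneg]
    · simp
    · rw [abs_of_pos h] at h1
      linarith [neg_abs_le (t * b)]

lemma perturb' (y : L13) (hy : ‖y‖ = 1) (hne : ∀ k, y k ≠ 0) (f : L13 →L[ℝ] ℝ)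
    (hf : f ∈ suppFunctionals y) (z : L13) (hz : f z = 0) :
    ∃ d > 0, ∀ t : ℝ, |t| ≤ d → ‖y + t • z‖ ≤ 1 := by
  obtain ⟨c, rfl, hc⟩ := f_eq f
  rw [hf.1] at hc
  have hfy := hf.2
  rw [coordF_apply] at hfy hz
  have le : ∀ j, c j * y j ≤ |y j| := fun j => by
    refine (le_abs_self _).trans ?_
    rw [abs_mul]; exact mul_le_of_le_one_left (abs_nonneg _) (hc j)
  rw [norm13] at hy
  have eq : ∀ j, c j * y j = |y j| := by
    have h0 := le 0
    have h1 := le 1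
    have h2 := le 2
    intro j
    fin_cases j <;> simp <;> linarith
  have cs : ∀ j, (SignType.sign (y j) : ℝ) = c j := by
    intro j
    apply mul_right_cancel₀ (hne j)
    rw [eq j, sgn_mul]
  obtain ⟨d0, hd0, H0⟩ := abs_near (y 0) (z 0) (hne 0)
  obtain ⟨d1, hd1, H1⟩ := abs_near (y 1) (z 1) (hne 1)
  obtain ⟨d2, hd2, H2⟩ := abs_near (y 2) (z 2) (hne 2)
  refine ⟨min d0 (min d1 d2), by positivity, fun t ht => ?_⟩
  simp only [le_min_iff] at ht
  rw [norm13]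
  simp only [PiLp.add_apply, PiLp.smul_apply, smul_eq_mul]
  rw [H0 t ht.1, H1 t ht.2.1, H2 t ht.2.2, cs, cs, cs]
  linear_combination hfy + t * hz

lemma perturb (y : L13) (hy : ‖y‖ = 1) (hne : ∀ k, y k ≠ 0) (f : L13 →L[ℝ] ℝ)
    (hf : f ∈ pm (suppFunctionals y)) (z : L13) (hz : f z = 0) :
    ∃ d > 0, ∀ t : ℝ, |t| ≤ d → ‖y + t • z‖ ≤ 1 := by
  rcases hf with hf | hf
  · exact perturb' y hy hne f hf z hz
  · exact perturb' y hy hne (-f) hf z (by simp [hz])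

/-- evaluation functional -/
def ev (u : Linf3) : (L13 →L[ℝ] ℝ) →ₗ[ℝ] ((Linf3 →L[ℝ] L13) →L[ℝ] ℝ) where
  toFun g := g.comp (ContinuousLinearMap.apply ℝ L13 u)
  map_add' g h := by ext; simp
  map_smul' g h := by ext; simp

lemma ev_apply (u : Linf3) (g : L13 →L[ℝ] ℝ) (A : Linf3 →L[ℝ] L13) : ev u g A = g (A u) := rfl

lemma ev_mem (T : Linf3 →L[ℝ] L13) (hT : ‖T‖ = 1) (u : Linf3) (hu : ‖u‖ = 1) (g : L13 →L[ℝ] ℝ)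
    (hg : g ∈ suppFunctionals (T u)) : ev u g ∈ suppFunctionals T := by
  refine ⟨le_antisymm ?_ ?_, hg.2⟩
  · refine ContinuousLinearMap.opNorm_le_bound _ zero_le_one fun A => ?_
    rw [ev_apply]
    have h1 := g.le_opNorm (A u)
    have h2 := A.le_opNorm u
    rw [hg.1, one_mul] at h1
    rw [hu, mul_one] at h2
    linarith
  · have := (ev u g).le_opNorm T
    rw [hT, ev_apply, hg.2] at this
    simpa using this

lemma ev_mem_span (T : Linf3 →L[ℝ] L13) (hT : ‖T‖ = 1) (u : Linf3) (hu : ‖u‖ = 1)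
    (g : L13 →L[ℝ] ℝ) (hg : g ∈ Submodule.span ℝ (suppFunctionals (T u))) :
    ev u g ∈ Submodule.span ℝ (suppFunctionals T) := by
  induction hg using Submodule.span_induction with
  | mem x h => exact Submodule.subset_span (ev_mem T hT u hu x h)
  | zero => simp
  | add x y _ _ hx hy => rw [map_add]; exact add_mem hx hy
  | smul a x _ hx => rw [map_smul]; exact Submodule.smul_mem _ _ hx

lemma pm_mem_span (y : L13) (g : L13 →L[ℝ] ℝ) (hg : g ∈ pm (suppFunctionals y)) :
    g ∈ Submodule.span ℝ (suppFunctionals y) := by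
  rcases hg with hg | hg
  · exact Submodule.subset_span hg
  · rw [← neg_neg g]
    exact neg_mem (Submodule.subset_span hg)

lemma li_abs {V ι : Type*} [NormedAddCommGroup V] [NormedSpace ℝ V] [Fintype ι]
    (L : ι → V →L[ℝ] ℝ) (h : ∀ c : ι → ℝ, (∀ A, ∑ i, c i * L i A = 0) → ∀ i, c i = 0) :
    LinearIndependent ℝ L := by
  refine Fintype.linearIndependent_iff.2 fun c hc => h c fun A => ?_
  have := congrArg (fun F : V →L[ℝ] ℝ => F A) hc
  simpa using this

lemma finrank_abs {V ι : Type*} [NormedAddCommGroup V] [NormedSpace ℝ V] [Fintype ι]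
    (L : ι → V →L[ℝ] ℝ) (h : LinearIndependent ℝ L) :
    finrank ℝ (Submodule.span ℝ (Set.range L)) = Fintype.card ι :=
  finrank_span_eq_card h

lemma span_abs {V ι : Type*} [NormedAddCommGroup V] [NormedSpace ℝ V] [Finite ι]
    (L : ι → V →L[ℝ] ℝ) (F : V →L[ℝ] ℝ) (hker : ∀ A, (∀ i, L i A = 0) → F A = 0) :
    F ∈ Submodule.span ℝ (Set.range L) := by
  have := Fintype.ofFinite ι
  have hmem := mem_span_of_iInf_ker_le_ker
    (L := fun i => (L i : V →ₗ[ℝ] ℝ)) (K := (F : V →ₗ[ℝ] ℝ)) (by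
      intro A hA
      simp only [Submodule.mem_iInf, LinearMap.mem_ker] at hA ⊢
      exact hker A hA)
  rw [Submodule.mem_span_range_iff_exists_fun] at hmem
  obtain ⟨c, hc⟩ := hmem
  rw [Submodule.mem_span_range_iff_exists_fun]
  refine ⟨c, ?_⟩
  ext A
  have := congrArg (fun G : V →ₗ[ℝ] ℝ => G A) hc
  simpa using this

lemma main_lemma (T : Linf3 →L[ℝ] L13) (hT : ‖T‖ = 1) (b : Basis (Fin 3) ℝ Linf3) (u4 : Linf3)
    (hb : ∀ i, ‖b i‖ = 1)
    (hnorm : ∀ A : Linf3 →L[ℝ] L13, (∀ i, ‖A (b i)‖ ≤ 1) → ‖A u4‖ ≤ 1 → ‖A‖ ≤ 1)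
    (hTb : ∀ i, ‖T (b i)‖ = 1) (hT4 : ‖T u4‖ = 1)
    (f : L13 →L[ℝ] ℝ)
    (n0 : ∀ k, T (b 0) k ≠ 0) (n1 : ∀ k, T (b 1) k ≠ 0) (n4 : ∀ k, T u4 k ≠ 0)
    (f0 : f ∈ pm (suppFunctionals (T (b 0)))) (f1 : f ∈ pm (suppFunctionals (T (b 1))))
    (f4 : f ∈ pm (suppFunctionals (T u4)))
    (h3 : finrank ℝ (Submodule.span ℝ (suppFunctionals (T (b 2)))) = 3) :
    finrank ℝ (Submodule.span ℝ (suppFunctionals T)) = 5 := by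
  let E : Fin 3 → L13 →L[ℝ] ℝ := fun j => PiLp.proj 1 (fun _ : Fin 3 => ℝ) j
  let L : Fin 2 ⊕ Fin 3 → ((Linf3 →L[ℝ] L13) →L[ℝ] ℝ) :=
    Sum.elim (fun i => ev (b i.castSucc) f) (fun j => ev (b 2) (E j))
  have htop : Submodule.span ℝ (suppFunctionals (T (b 2))) = ⊤ := by
    apply Submodule.eq_top_of_finrank_eq
    rw [h3]
    have e : (L13 →ₗ[ℝ] ℝ) ≃ₗ[ℝ] (L13 →L[ℝ] ℝ) := LinearMap.toContinuousLinearMap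
    rw [← e.finrank_eq, Module.finrank_linearMap, (WithLp.linearEquiv 1 ℝ (Fin 3 → ℝ)).finrank_eq]
    simp
  have hf0 : f ≠ 0 := by
    rintro rfl
    rcases f0 with h | h
    · have := h.2
      simp at this
    · have := h.2
      simp at this
  obtain ⟨v, hv⟩ : ∃ v, f v = 1 := by
    obtain ⟨w, hw⟩ : ∃ w, f w ≠ 0 := by
      by_contra! hcon
      exact hf0 (ContinuousLinearMap.ext hcon)
    exact ⟨(f w)⁻¹ • w, by simp [hw]⟩
  let φ : Fin 3 → Linf3 →L[ℝ] ℝ := fun i => LinearMap.toContinuousLinearMap (b.coord i)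
  have hφ : ∀ i j, φ i (b j) = if j = i then 1 else 0 := by
    intro i j
    simp [φ, Finsupp.single_apply]
  have hLI : LinearIndependent ℝ L := by
    apply li_abs
    intro c hc
    have hc' : ∀ A : Linf3 →L[ℝ] L13, c (.inl 0) * f (A (b 0)) + c (.inl 1) * f (A (b 1)) +
        (c (.inr 0) * (A (b 2)) 0 + c (.inr 1) * (A (b 2)) 1 + c (.inr 2) * (A (b 2)) 2) = 0 := by
      intro A
      have := hc A
      simpa [L, Fin.sum_univ_three, Fin.sum_univ_two, ev_apply, E] using this
    have a0 := hc' ((φ 0).smulRight v)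
    have a1 := hc' ((φ 1).smulRight v)
    have a2 := fun k => hc' ((φ 2).smulRight (WithLp.toLp 1 (Pi.single k 1)))
    have b0 := a2 0
    have b1 := a2 1
    have b2 := a2 2
    simp [hφ, hv] at a0 a1 b0 b1 b2
    rintro (i | i) <;> fin_cases i <;> simp <;> assumption
  have hspan : Submodule.span ℝ (suppFunctionals T) = Submodule.span ℝ (Set.range L) := by
    apply le_antisymm
    · rw [Submodule.span_le]
      intro F hF
      have hker : ∀ A : Linf3 →L[ℝ] L13, (∀ i, L i A = 0) → F A = 0 := by
        intro A hA
        have A0 : f (A (b 0)) = 0 := hA (.inl 0)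
        have A1 : f (A (b 1)) = 0 := hA (.inl 1)
        have A2 : A (b 2) = 0 := by
          ext j
          exact hA (.inr j)
        have A4 : f (A u4) = 0 := by
          have e := b.sum_repr u4
          rw [Fin.sum_univ_three] at e
          rw [← e]
          simp only [map_add, map_smul, A0, A1, A2]
          simp
        obtain ⟨d0, hd0, H0⟩ := perturb _ (hTb 0) n0 f f0 _ A0
        obtain ⟨d1, hd1, H1⟩ := perturb _ (hTb 1) n1 f f1 _ A1
        obtain ⟨d4, hd4, H4⟩ := perturb _ hT4 n4 f f4 _ A4
        obtain ⟨d, hd, hdd⟩ : ∃ d > 0, d ≤ d0 ∧ d ≤ d1 ∧ d ≤ d4 :=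
          ⟨min d0 (min d1 d4), by positivity, by simp, by simp, by simp⟩
        have key : ∀ t : ℝ, |t| ≤ d → t * F A ≤ 0 := by
          intro t ht
          have hn : ‖T + t • A‖ ≤ 1 := by
            apply hnorm
            · intro i
              fin_cases i
              · exact H0 t (ht.trans hdd.1)
              · exact H1 t (ht.trans hdd.2.1)
              · simp [A2, hTb 2]
            · exact H4 t (ht.trans hdd.2.2)
          have h1 := F.le_opNorm (T + t • A)
          rw [hF.1, one_mul] at h1
          have h2 := (le_abs_self _).trans (h1.trans hn)
          rw [map_add, map_smul, hF.2, smul_eq_mul] at h2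
          linarith
        have k1 := key d (abs_of_pos hd).le
        have k2 := key (-d) (by rw [abs_neg, abs_of_pos hd])
        have : d * F A = 0 := by linarith
        exact (mul_eq_zero.1 this).resolve_left hd.ne'
      exact span_abs L F hker
    · rw [Submodule.span_le]
      rintro _ ⟨i | j, rfl⟩
      · fin_cases i
        · exact ev_mem_span T hT _ (hb 0) f (pm_mem_span _ _ f0)
        · exact ev_mem_span T hT _ (hb 1) f (pm_mem_span _ _ f1)
      · exact ev_mem_span T hT _ (hb 2) _ (htop ▸ Submodule.mem_top)
  rw [hspan, finrank_abs L hLI]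
  simp

lemma norm_le_of (A : Linf3 →L[ℝ] L13) (h1 : ‖A x₁‖ ≤ 1) (h2 : ‖A x₂‖ ≤ 1) (h3 : ‖A x₃‖ ≤ 1)
    (h4 : ‖A x₄‖ ≤ 1) : ‖A‖ ≤ 1 := by
  have hball : ∀ x : Linf3, ‖x‖ ≤ 1 → ‖A x‖ ≤ 1 := by
    intro x hx
    have hc : ∀ i, |x i| ≤ 1 := fun i => (norm_le_pi_norm x i).trans hx
    obtain ⟨a1, a2⟩ := abs_le.1 (hc 0)
    obtain ⟨b1, b2⟩ := abs_le.1 (hc 1)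
    obtain ⟨c1, c2⟩ := abs_le.1 (hc 2)
    have hconv : Convex ℝ {y : Linf3 | ‖A y‖ ≤ 1} := by
      intro p hp q hq s t hs ht hst
      simp only [Set.mem_ofPred_eq] at *
      rw [map_add, map_smul, map_smul]
      refine (norm_add_le _ _).trans ?_
      rw [norm_smul, norm_smul, Real.norm_of_nonneg hs, Real.norm_of_nonneg ht]
      nlinarith
    -- interpolate in one coordinate at a time
    have step : ∀ (p q : Linf3) (r : ℝ), -1 ≤ r → r ≤ 1 → ‖A p‖ ≤ 1 → ‖A q‖ ≤ 1 →
        ‖A (((1 + r) / 2) • p + ((1 - r) / 2) • q)‖ ≤ 1 := fun p q r h h' hp hq =>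
      hconv hp hq (by linarith) (by linarith) (by ring)
    have up := step _ _ (x 1) b1 b2 (step _ _ (x 0) a1 a2 h1 h2) (step _ _ (x 0) a1 a2 h4 h3)
    have n : ∀ p : Linf3, ‖A p‖ ≤ 1 → ‖A (-p)‖ ≤ 1 := fun p hp => by rwa [map_neg, norm_neg]
    have dn := step _ _ (x 1) b1 b2 (step _ _ (x 0) a1 a2 (n _ h3) (n _ h4))
      (step _ _ (x 0) a1 a2 (n _ h2) (n _ h1))
    have := step _ _ (x 2) c1 c2 up dn
    convert this using 3
    ext i
    fin_cases i <;> simp [x₁, x₂, x₃, x₄] <;> ring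
  refine ContinuousLinearMap.opNorm_le_of_unit_norm zero_le_one fun x hx => hball x hx.le

lemma supp_neg_s17 (y : L13) : suppFunctionals (-y) = -suppFunctionals y := by
  ext f
  simp [suppFunctionals]

lemma assemble (T : Linf3 →L[ℝ] L13) (hT : ‖T‖ = 1) (u0 u1 u2 u4 : Linf3)
    (hli : LinearIndependent ℝ ![u0, u1, u2])
    (hnorm : ∀ A : Linf3 →L[ℝ] L13, ‖A u0‖ ≤ 1 → ‖A u1‖ ≤ 1 → ‖A u2‖ ≤ 1 → ‖A u4‖ ≤ 1 → ‖A‖ ≤ 1)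
    (h0 : u0 ∈ Sk T 1) (h1 : u1 ∈ Sk T 1) (h2 : u2 ∈ Sk T 3) (h4 : u4 ∈ Sk T 1)
    (hJ : ∀ xi ∈ Sk T 1, ∀ xj ∈ Sk T 1,
      pm (suppFunctionals (T xi)) = pm (suppFunctionals (T xj))) :
    finrank ℝ (Submodule.span ℝ (suppFunctionals T)) = 5 := by
  have N : ∀ u ∈ MTExt T, ‖u‖ = 1 ∧ ‖T u‖ = 1 := fun u hu =>
    ⟨by simpa using hu.1.1, hu.1.2.trans hT⟩
  obtain ⟨f, hf⟩ : (suppFunctionals (T u0)).Nonempty := by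
    by_contra hcon
    rw [Set.not_nonempty_iff_eq_empty] at hcon
    have := h0.2
    rw [hcon, Submodule.span_empty, finrank_bot] at this
    norm_num at this
  have hf0 : f ∈ pm (suppFunctionals (T u0)) := Or.inl hf
  let b : Basis (Fin 3) ℝ Linf3 := basisOfLinearIndependentOfCardEqFinrank hli (by simp)
  have hb : ⇑b = ![u0, u1, u2] := coe_basisOfLinearIndependentOfCardEqFinrank _ _
  have b0 : b 0 = u0 := by rw [hb]; rfl
  have b1 : b 1 = u1 := by rw [hb]; rfl
  have b2 : b 2 = u2 := by rw [hb]; rfl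
  apply main_lemma T hT b u4 (f := f)
  · intro i
    fin_cases i
    · simpa [b0] using (N _ h0.1).1
    · simpa [b1] using (N _ h1.1).1
    · simpa [b2] using (N _ h2.1).1
  · intro A hA hA4
    exact hnorm A (b0 ▸ hA 0) (b1 ▸ hA 1) (b2 ▸ hA 2) hA4
  · intro i
    fin_cases i
    · simpa [b0] using (N _ h0.1).2
    · simpa [b1] using (N _ h1.1).2
    · simpa [b2] using (N _ h2.1).2
  · exact (N _ h4.1).2
  · rw [b0]; exact coords_ne _ (N _ h0.1).2 h0.2
  · rw [b1]; exact coords_ne _ (N _ h1.1).2 h1.2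
  · exact coords_ne _ (N _ h4.1).2 h4.2
  · rw [b0]; exact hf0
  · rw [b1, hJ _ h1 _ h0]; exact hf0
  · rw [hJ _ h4 _ h0]; exact hf0
  · rw [b2]; exact h2.2

lemma li_of (u v w : Linf3) (h : Matrix.det (Matrix.of ![u, v, w]) ≠ 0) :
    LinearIndependent ℝ ![u, v, w] :=
  Matrix.linearIndependent_rows_of_det_ne_zero h

theorem stmt_17
    (T : Linf3 →L[ℝ] L13) (hT : ‖T‖ = 1)
    (hMT : MTExt T = {x₁, -x₁, x₂, -x₂, x₃, -x₃, x₄, -x₄})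
    (h1 : (Sk T 1).encard = 6) (h2 : (Sk T 2).encard = 0)
    (h3 : (Sk T 3).encard = 2)
    (hJ : ∀ xi ∈ Sk T 1, ∀ xj ∈ Sk T 1,
      pm (suppFunctionals (T xi)) = pm (suppFunctionals (T xj)))
    :
    finrank ℝ (Submodule.span ℝ (suppFunctionals T)) = 5 := by
  have Sneg : ∀ x ∈ Sk T 3, -x ∈ Sk T 3 := by
    intro x hx
    refine ⟨?_, ?_⟩
    · have h := hx.1
      rw [hMT] at h ⊢
      simp only [Set.mem_insert_iff, Set.mem_singleton_iff] at h ⊢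
      rcases h with rfl | rfl | rfl | rfl | rfl | rfl | rfl | rfl <;> simp
    · rw [map_neg, supp_neg_s17, Submodule.span_neg]
      exact hx.2
  have hcov : ∀ x ∈ MTExt T, x ∉ Sk T 3 → x ∈ Sk T 1 := by
    have hdis : Disjoint (Sk T 1) (Sk T 3) := by
      rw [Set.disjoint_left]
      intro x hx hx'
      have := hx.2.symm.trans hx'.2
      norm_num at this
    have hcard := Set.encard_union_eq hdis
    rw [h1, h3] at hcard
    have hsub : Sk T 1 ∪ Sk T 3 ⊆ MTExt T := Set.union_subset (fun x h => h.1) (fun x h => h.1)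
    have hfin : (MTExt T).Finite := by rw [hMT]; exact Set.toFinite _
    have hle : (MTExt T).encard ≤ 8 := by
      rw [hMT]
      have : ({x₁, -x₁, x₂, -x₂, x₃, -x₃, x₄, -x₄} : Set Linf3) =
          (([x₁, -x₁, x₂, -x₂, x₃, -x₃, x₄, -x₄].toFinset : Finset Linf3) : Set Linf3) := by
        simp
      rw [this, Set.encard_coe_eq_coe_finsetCard]
      exact_mod_cast List.toFinset_card_le _
    have heq := hfin.eq_of_subset_of_encard_le' hsub (hle.trans (by rw [hcard]; norm_num))
    intro x hx hx3
    rw [← heq] at hx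
    exact hx.resolve_right hx3
  have huniq : ∀ x ∈ Sk T 3, ∀ y ∈ Sk T 3, x 2 = 1 → y 2 = 1 → x = y := by
    intro x hx y hy hx2 hy2
    by_contra hne
    obtain ⟨p, q, -, hpq⟩ := Set.encard_eq_two.1 h3
    have m1 := Sneg x hx
    have ne1 : x ≠ -x := fun h => by
      have := congrFun h 2
      simp [hx2] at this
      norm_num at this
    have ne2 : y ≠ -x := fun h => by
      have := congrFun h 2
      simp [hx2, hy2] at this
      norm_num at this
    rw [hpq] at hx hy m1
    simp only [Set.mem_insert_iff, Set.mem_singleton_iff] at hx hy m1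
    grind
  have e1 : x₁ 2 = 1 := by simp [x₁]
  have e2 : x₂ 2 = 1 := by simp [x₂]
  have e3 : x₃ 2 = 1 := by simp [x₃]
  have e4 : x₄ 2 = 1 := by simp [x₄]
  have d12 : x₁ ≠ x₂ := fun h => by have := congrFun h 0; norm_num [x₁, x₂] at this
  have d13 : x₁ ≠ x₃ := fun h => by have := congrFun h 0; norm_num [x₁, x₃] at this
  have d14 : x₁ ≠ x₄ := fun h => by have := congrFun h 1; norm_num [x₁, x₄] at this
  have d23 : x₂ ≠ x₃ := fun h => by have := congrFun h 1; norm_num [x₂, x₃] at this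
  have d24 : x₂ ≠ x₄ := fun h => by have := congrFun h 0; norm_num [x₂, x₄] at this
  have d34 : x₃ ≠ x₄ := fun h => by have := congrFun h 0; norm_num [x₃, x₄] at this
  have M1 : x₁ ∈ MTExt T := by rw [hMT]; simp
  have M2 : x₂ ∈ MTExt T := by rw [hMT]; simp
  have M3 : x₃ ∈ MTExt T := by rw [hMT]; simp
  have M4 : x₄ ∈ MTExt T := by rw [hMT]; simp
  have hex : x₁ ∈ Sk T 3 ∨ x₂ ∈ Sk T 3 ∨ x₃ ∈ Sk T 3 ∨ x₄ ∈ Sk T 3 := by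
    obtain ⟨p, q, -, hpq⟩ := Set.encard_eq_two.1 h3
    have hp : p ∈ Sk T 3 := by rw [hpq]; simp
    have hm := hp.1
    have hn := Sneg p hp
    rw [hMT] at hm
    simp only [Set.mem_insert_iff, Set.mem_singleton_iff] at hm
    rcases hm with rfl | rfl | rfl | rfl | rfl | rfl | rfl | rfl <;>
      (try simp only [neg_neg] at hn) <;> tauto
  rcases hex with h | h | h | h
  · refine assemble T hT x₂ x₃ x₁ x₄ ?_ (fun A a b c d => norm_le_of A c a b d)
      (hcov _ M2 fun h' => d12 (huniq _ h _ h' e1 e2)) (hcov _ M3 fun h' => d13 (huniq _ h _ h' e1 e3))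
      h (hcov _ M4 fun h' => d14 (huniq _ h _ h' e1 e4)) hJ
    exact li_of _ _ _ (by rw [Matrix.det_fin_three]; simp [x₁, x₂, x₃, x₄]; norm_num)
  · refine assemble T hT x₁ x₃ x₂ x₄ ?_ (fun A a b c d => norm_le_of A a c b d)
      (hcov _ M1 fun h' => d12 (huniq _ h' _ h e1 e2)) (hcov _ M3 fun h' => d23 (huniq _ h _ h' e2 e3))
      h (hcov _ M4 fun h' => d24 (huniq _ h _ h' e2 e4)) hJ
    exact li_of _ _ _ (by rw [Matrix.det_fin_three]; simp [x₁, x₂, x₃, x₄]; norm_num)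
  · refine assemble T hT x₁ x₂ x₃ x₄ ?_ (fun A a b c d => norm_le_of A a b c d)
      (hcov _ M1 fun h' => d13 (huniq _ h' _ h e1 e3)) (hcov _ M2 fun h' => d23 (huniq _ h' _ h e2 e3))
      h (hcov _ M4 fun h' => d34 (huniq _ h _ h' e3 e4)) hJ
    exact li_of _ _ _ (by rw [Matrix.det_fin_three]; simp [x₁, x₂, x₃, x₄]; norm_num)
  · refine assemble T hT x₁ x₂ x₄ x₃ ?_ (fun A a b c d => norm_le_of A a b d c)
      (hcov _ M1 fun h' => d14 (huniq _ h' _ h e1 e4)) (hcov _ M2 fun h' => d24 (huniq _ h' _ h e2 e4))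
      h (hcov _ M3 fun h' => d34 (huniq _ h' _ h e3 e4)) hJ
    exact li_of _ _ _ (by rw [Matrix.det_fin_three]; simp [x₁, x₂, x₃, x₄]; norm_num)
end
end
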